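/- Every connected cubic simple graph on n vertices contains a set of at most ⌈n/9⌉ vertex-disjoint paths whose vertex sets cover all vertices of the graph. -/

import Mathlib

set_option linter.unusedSectionVars false

section

variable {V : Type*} [DecidableEq V]

/-- `p 0, …, p (m-1)` is a Hamiltonian path of the subgraph induced on `X`. -/
structure HP (G : SimpleGraph V) (X : Finset V) (m : ℕ) (p : ℕ → V) : Prop where
  pos : 0 < m
  inj : ∀ i j, i < m → j < m → p i = p j → i = j
  adj : ∀ i, i + 1 < m → G.Adj (p i) (p (i+1))
  mem : ∀ v, v ∈ X ↔ ∃ i, i < m ∧ p i = v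

/-- Hamiltonian path of `X` from `u` to `w`. -/
def En2 (G : SimpleGraph V) (X : Finset V) (u w : V) : Prop :=
  ∃ m p, HP G X m p ∧ p 0 = u ∧ p (m-1) = w

def En (G : SimpleGraph V) (X : Finset V) (w : V) : Prop := ∃ u, En2 G X u w

def Tr (G : SimpleGraph V) (X : Finset V) : Prop := ∃ u w, En2 G X u w

/-- All vertices are ends of Hamiltonian paths. -/
def Full (G : SimpleGraph V) (X : Finset V) : Prop := ∀ v ∈ X, En G X v

variable {G : SimpleGraph V} {X Y : Finset V} {m : ℕ} {p : ℕ → V}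

namespace HP

theorem memX (h : HP G X m p) {i : ℕ} (hi : i < m) : p i ∈ X := (h.mem _).2 ⟨i, hi, rfl⟩

theorem ne (h : HP G X m p) {i j : ℕ} (hi : i < m) (hj : j < m) (hij : i ≠ j) : p i ≠ p j :=
  fun e => hij (h.inj i j hi hj e)

theorem card (h : HP G X m p) : X.card = m := by
  have : X = (Finset.range m).image p := by
    ext v
    rw [h.mem v]
    simp
  rw [this, Finset.card_image_of_injOn, Finset.card_range]
  intro a ha b hb e
  simp at ha hb
  exact h.inj a b ha hb e

theorem adj' (h : HP G X m p) {i j : ℕ} (hij : j = i + 1) (hi : j < m) : G.Adj (p i) (p j) := by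
  subst hij
  exact h.adj i hi

theorem invol (h : HP G X m p) (σ : ℕ → ℕ) (h1 : ∀ i, i < m → σ i < m)
    (h2 : ∀ i, i < m → σ (σ i) = i)
    (h3 : ∀ i, i + 1 < m → G.Adj (p (σ i)) (p (σ (i+1)))) : HP G X m (fun i => p (σ i)) where
  pos := h.pos
  inj := by
    intro i j hi hj e
    have := h.inj _ _ (h1 i hi) (h1 j hj) e
    rw [← h2 i hi, ← h2 j hj, this]
  adj := h3
  mem := by
    intro v
    rw [h.mem v]
    constructor
    · rintro ⟨i, hi, rfl⟩
      exact ⟨σ i, h1 i hi, by simp only [h2 i hi]⟩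
    · rintro ⟨i, hi, rfl⟩
      exact ⟨σ i, h1 i hi, rfl⟩

theorem rev (h : HP G X m p) : HP G X m (fun i => p (m - 1 - i)) := by
  refine h.invol (fun i => m - 1 - i) (fun i hi => by omega) (fun i hi => by omega) ?_
  intro i hi
  exact (h.adj' (by omega) (by omega)).symm

end HP

/-- Pósa rotation. -/
def rot (p : ℕ → V) (m d : ℕ) : ℕ → V := fun i => p (if i ≤ d then i else m + d - i)

theorem rot_le {p : ℕ → V} {m d i : ℕ} (h : i ≤ d) : rot p m d i = p i := by simp [rot, h]

theorem rot_gt {p : ℕ → V} {m d i : ℕ} (h : d < i) : rot p m d i = p (m + d - i) := by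
  simp [rot, Nat.not_le.2 h]

namespace HP

theorem rot (h : HP G X m p) {d : ℕ} (hd : d + 1 < m) (ha : G.Adj (p (m-1)) (p d)) :
    HP G X m (rot p m d) := by
  refine h.invol (fun i => if i ≤ d then i else m + d - i) ?_ ?_ ?_
  · intro i hi
    split_ifs <;> omega
  · intro i hi
    split_ifs <;> omega
  · intro i hi
    split_ifs with h1 h2 h2
    · exact h.adj i hi
    · have : i = d := by omega
      subst this
      have e : m + i - (i+1) = m - 1 := by omega
      rw [e]
      exact ha.symm
    · omega
    · exact (h.adj' (by omega) (by omega)).symm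

theorem join {l : ℕ} {q : ℕ → V} (h : HP G X m p) (h' : HP G Y l q) (hd : Disjoint X Y)
    (ha : G.Adj (p (m-1)) (q 0)) :
    HP G (X ∪ Y) (m + l) (fun i => if i < m then p i else q (i - m)) where
  pos := by have := h.pos; omega
  inj := by
    intro i j hi hj e
    have key : ∀ a b, a < m → b < l → p a ≠ q b := by
      intro a b ha hb e
      exact (Finset.disjoint_left.1 hd) (h.memX ha) (e ▸ h'.memX hb)
    split_ifs at e with h1 h2 h2
    · exact h.inj _ _ h1 h2 e
    · exact absurd e (key _ _ h1 (by omega))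
    · exact absurd e.symm (key _ _ h2 (by omega))
    · have := h'.inj _ _ (by omega) (by omega) e
      omega
  adj := by
    intro i hi
    split_ifs with h1 h2 h2
    · exact h.adj i h2
    · have e1 : i = m - 1 := by omega
      have e2 : i + 1 - m = 0 := by omega
      rw [e2, e1]
      exact ha
    · omega
    · exact h'.adj' (by omega) (by omega)
  mem := by
    intro v
    rw [Finset.mem_union, h.mem, h'.mem]
    constructor
    · rintro (⟨i, hi, rfl⟩ | ⟨i, hi, rfl⟩)
      · exact ⟨i, by omega, by simp [hi]⟩
      · exact ⟨m + i, by omega, by simp⟩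
    · rintro ⟨i, hi, rfl⟩
      by_cases h1 : i < m
      · left
        exact ⟨i, h1, by simp [h1]⟩
      · right
        exact ⟨i - m, by omega, by simp [h1]⟩

theorem sub (h : HP G X m p) {a l : ℕ} (hl : 0 < l) (hal : a + l ≤ m) :
    HP G ((Finset.range l).image (fun i => p (a + i))) l (fun i => p (a + i)) where
  pos := hl
  inj := by
    intro i j hi hj e
    have := h.inj _ _ (by omega) (by omega) e
    omega
  adj := by
    intro i hi
    exact h.adj' (by omega) (by omega)
  mem := by
    intro v
    simp

theorem en2 (h : HP G X m p) : En2 G X (p 0) (p (m-1)) := ⟨m, p, h, rfl, rfl⟩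

theorem en (h : HP G X m p) : En G X (p (m-1)) := ⟨_, h.en2⟩

end HP

theorem En2.symm {u w : V} (h : En2 G X u w) : En2 G X w u := by
  obtain ⟨m, p, h, rfl, rfl⟩ := h
  have := h.rev.en2
  simpa using this

theorem HP.en0 (h : HP G X m p) : En G X (p 0) := ⟨_, h.en2.symm⟩

theorem En2.join {u w u' w' : V} (h : En2 G X u w) (h' : En2 G Y u' w') (hd : Disjoint X Y)
    (ha : G.Adj w u') : En2 G (X ∪ Y) u w' := by
  obtain ⟨m, p, h, rfl, rfl⟩ := h
  obtain ⟨l, q, h', rfl, rfl⟩ := h'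
  have := (h.join h' hd ha).en2
  have h1 := h.pos
  have h2 := h'.pos
  rw [if_pos h1, if_neg (by omega)] at this
  have e : m + l - 1 - m = l - 1 := by omega
  rw [e] at this
  exact this

theorem En2.tr {u w : V} (h : En2 G X u w) : Tr G X := ⟨u, w, h⟩

theorem En2.single (v : V) : En2 G {v} v v := by
  refine ⟨1, fun _ => v, ⟨by omega, by intros; omega, by intros; omega, ?_⟩, rfl, rfl⟩
  intro w
  simp only [Finset.mem_singleton]
  constructor
  · rintro rfl
    exact ⟨0, by omega, rfl⟩
  · rintro ⟨_, _, rfl⟩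
    rfl

theorem Tr.nonempty (h : Tr G X) : X.Nonempty := by
  obtain ⟨u, w, m, p, h, -, -⟩ := h
  exact ⟨p 0, h.memX h.pos⟩

/-- Split a Hamiltonian path after index `i`. -/
theorem HP.split (h : HP G X m p) {i : ℕ} (hi : i + 1 < m) :
    ∃ X1 X2, X = X1 ∪ X2 ∧ Disjoint X1 X2 ∧ En2 G X1 (p 0) (p i) ∧
      En2 G X2 (p (i+1)) (p (m-1)) ∧ (∀ j, j ≤ i → p j ∈ X1) ∧
      (∀ j, i < j → j < m → p j ∈ X2) := by
  have h1 := h.sub (a := 0) (l := i+1) (by omega) (by omega)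
  have h2 := h.sub (a := i+1) (l := m - (i+1)) (by omega) (by omega)
  refine ⟨(Finset.range (i+1)).image (fun j => p (0 + j)),
    (Finset.range (m-(i+1))).image (fun j => p (i+1+j)), ?_, ?_, ?_, ?_, ?_, ?_⟩
  rotate_left 2
  · have := h1.en2
    simpa using this
  · have := h2.en2
    have e : i + 1 + (m - (i+1) - 1) = m - 1 := by omega
    simpa [e] using this
  · intro j hj
    simp only [Finset.mem_image, Finset.mem_range]
    exact ⟨j, by omega, by simp⟩
  · intro j hj hj'
    simp only [Finset.mem_image, Finset.mem_range]
    exact ⟨j - (i+1), by omega, by congr 1; omega⟩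
  · ext v
    rw [h.mem]
    simp only [Finset.mem_union, Finset.mem_image, Finset.mem_range]
    constructor
    · rintro ⟨j, hj, rfl⟩
      by_cases hji : j ≤ i
      · left
        exact ⟨j, by omega, by simp⟩
      · right
        exact ⟨j - (i+1), by omega, by congr 1; omega⟩
    · rintro (⟨j, hj, rfl⟩ | ⟨j, hj, rfl⟩)
      · exact ⟨_, by omega, rfl⟩
      · exact ⟨_, by omega, rfl⟩
  · rw [Finset.disjoint_left]
    intro v hv hv'
    simp only [Finset.mem_image, Finset.mem_range] at hv hv'
    obtain ⟨a, ha, rfl⟩ := hv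
    obtain ⟨b, hb, e⟩ := hv'
    have := h.inj _ _ (by omega) (by omega) e
    omega

/-- A Hamiltonian cycle makes the set full. -/
theorem HP.full_of_cycle (h : HP G X m p) (ha : G.Adj (p (m-1)) (p 0)) : Full G X := by
  intro v hv
  obtain ⟨i, hi, rfl⟩ := (h.mem v).1 hv
  by_cases him : i + 1 < m
  · obtain ⟨X1, X2, rfl, hd, e1, e2, -, -⟩ := h.split him
    have := e2.join e1 hd.symm ha
    rw [Finset.union_comm] at this
    exact ⟨_, this⟩
  · have : i = m - 1 := by omega
    rw [this]
    exact h.en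

end

section

variable {V : Type*} [DecidableEq V]
variable {G : SimpleGraph V} {X Y : Finset V} {m : ℕ} {p : ℕ → V}
/-- Every vertex has exactly three neighbours. -/
def IsCub (G : SimpleGraph V) : Prop :=
  ∀ v, ∃ a b c, a ≠ b ∧ a ≠ c ∧ b ≠ c ∧ ∀ w, G.Adj v w ↔ (w = a ∨ w = b ∨ w = c)

theorem IsCub.third (hc : IsCub G) {v a b : V} (ha : G.Adj v a) (hb : G.Adj v b) (hab : a ≠ b) :
    ∃ c, c ≠ a ∧ c ≠ b ∧ G.Adj v c := by
  obtain ⟨x, y, z, h1, h2, h3, h⟩ := hc v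
  have ha' := (h a).1 ha
  have hb' := (h b).1 hb
  rcases ha' with rfl | rfl | rfl <;> rcases hb' with rfl | rfl | rfl
  · exact absurd rfl hab
  · exact ⟨z, h2.symm, h3.symm, (h z).2 (by simp)⟩
  · exact ⟨y, h1.symm, h3, (h y).2 (by simp)⟩
  · exact ⟨z, h3.symm, h2.symm, (h z).2 (by simp)⟩
  · exact absurd rfl hab
  · exact ⟨x, h1, h2, (h x).2 (by simp)⟩
  · exact ⟨y, h3, h1.symm, (h y).2 (by simp)⟩
  · exact ⟨x, h2, h1, (h x).2 (by simp)⟩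
  · exact absurd rfl hab

theorem IsCub.only (hc : IsCub G) {v a b c w : V} (ha : G.Adj v a) (hb : G.Adj v b)
    (hcc : G.Adj v c) (hab : a ≠ b) (hac : a ≠ c) (hbc : b ≠ c) (hw : G.Adj v w) :
    w = a ∨ w = b ∨ w = c := by
  obtain ⟨x, y, z, h1, h2, h3, h⟩ := hc v
  have ha' := (h a).1 ha
  have hb' := (h b).1 hb
  have hc' := (h c).1 hcc
  have hw' := (h w).1 hw
  grind

/-- `v` has a neighbour outside `X`. -/
def Out (G : SimpleGraph V) (X : Finset V) (v : V) : Prop := ∃ w, G.Adj v w ∧ w ∉ X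

def Nn (G : SimpleGraph V) (X : Finset V) (v : V) : Prop := En G X v ∨ ¬ Out G X v

def Gd (G : SimpleGraph V) (X : Finset V) (p : ℕ → V) (h : ℕ) : Prop :=
  Nn G X (p h) ∧ Nn G X (p (h+1))

theorem HP.third (h : HP G X m p) (hc : IsCub G) {v : V} {a b : ℕ} (ho : ¬ Out G X v)
    (ha : a < m) (hb : b < m) (hab : a ≠ b) (h1 : G.Adj v (p a)) (h2 : G.Adj v (p b)) :
    ∃ c, c < m ∧ c ≠ a ∧ c ≠ b ∧ G.Adj v (p c) := by
  obtain ⟨c, h3, h4, h5⟩ := hc.third h1 h2 (h.ne ha hb hab)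
  have : c ∈ X := by
    by_contra hcX
    exact ho ⟨c, h5, hcX⟩
  obtain ⟨i, hi, rfl⟩ := (h.mem c).1 this
  exact ⟨i, hi, fun e => h3 (by rw [e]), fun e => h4 (by rw [e]), h5⟩

theorem HP.only (h : HP G X m p) (hc : IsCub G) {v : V} {a b c : ℕ}
    (h1 : G.Adj v (p a)) (h2 : G.Adj v (p b)) (h3 : G.Adj v (p c))
    (ha : a < m) (hb : b < m) (hcm : c < m) (hab : a ≠ b) (hac : a ≠ c) (hbc : b ≠ c)
    {e : ℕ} (he : e < m) (h4 : G.Adj v (p e)) : e = a ∨ e = b ∨ e = c := by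
  rcases hc.only h1 h2 h3 (h.ne ha hb hab) (h.ne ha hcm hac) (h.ne hb hcm hbc) h4 with h | h | h
  · left; exact HP.inj ‹_› _ _ he ha h
  · right; left; exact HP.inj ‹_› _ _ he hb h
  · right; right; exact HP.inj ‹_› _ _ he hcm h

theorem HP.notOut (h : HP G X m p) (hc : IsCub G) {v : V} {a b c : ℕ}
    (h1 : G.Adj v (p a)) (h2 : G.Adj v (p b)) (h3 : G.Adj v (p c))
    (ha : a < m) (hb : b < m) (hcm : c < m) (hab : a ≠ b) (hac : a ≠ c) (hbc : b ≠ c) :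
    ¬ Out G X v := by
  rintro ⟨w, hw, hwX⟩
  rcases hc.only h1 h2 h3 (h.ne ha hb hab) (h.ne ha hcm hac) (h.ne hb hcm hbc) hw with rfl | rfl | rfl
  · exact hwX (h.memX ha)
  · exact hwX (h.memX hb)
  · exact hwX (h.memX hcm)

/-- `q` is a Hamiltonian path agreeing with `p` up to index `j`. -/
def RP (G : SimpleGraph V) (X : Finset V) (m : ℕ) (p : ℕ → V) (j : ℕ) (q : ℕ → V) : Prop :=
  HP G X m q ∧ ∀ h, h ≤ j → q h = p h

def ER (G : SimpleGraph V) (X : Finset V) (m : ℕ) (p : ℕ → V) (j : ℕ) (w : V) : Prop :=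
  ∃ q, RP G X m p j q ∧ q (m-1) = w

variable {q : ℕ → V} {j : ℕ}

theorem RP.rot (h : RP G X m p j q) {d : ℕ} (hjd : j ≤ d) (hd : d + 1 < m)
    (ha : G.Adj (q (m-1)) (q d)) : RP G X m p j (rot q m d) :=
  ⟨h.1.rot hd ha, fun i hi => by rw [rot_le (by omega)]; exact h.2 i hi⟩

theorem RP.er (h : RP G X m p j q) {d : ℕ} (hjd : j ≤ d) (hd : d + 1 < m)
    (ha : G.Adj (q (m-1)) (q d)) : ER G X m p j (q (d+1)) :=
  ⟨_, h.rot hjd hd ha, by rw [rot_gt (by omega)]; congr 1; omega⟩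

theorem ER.en {w : V} (h : ER G X m p j w) : En G X w := by
  obtain ⟨q, hq, rfl⟩ := h
  exact hq.1.en

theorem ER.nn {w : V} (h : ER G X m p j w) : Nn G X w := Or.inl h.en

theorem HP.chord_notOut (h : HP G X m p) (hc : IsCub G) {d : ℕ} (h1 : 1 ≤ d) (hd : d + 2 < m)
    (ha : G.Adj (p (m-1)) (p d)) : ¬ Out G X (p d) :=
  h.notOut hc (a := d-1) (b := d+1) (c := m-1) (h.adj' (by omega) (by omega)).symm
    (h.adj' (by omega) (by omega)) ha.symm (by omega) (by omega) (by omega) (by omega)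
    (by omega) (by omega)

theorem HP.chord_only (h : HP G X m p) (hc : IsCub G) {d e : ℕ} (h1 : 1 ≤ d) (hd : d + 2 < m)
    (ha : G.Adj (p (m-1)) (p d)) (he : e < m) (h2 : G.Adj (p d) (p e)) :
    e = d - 1 ∨ e = d + 1 ∨ e = m - 1 :=
  h.only hc (v := p d) (a := d-1) (b := d+1) (c := m-1) (h.adj' (by omega) (by omega)).symm
    (h.adj' (by omega) (by omega)) ha.symm (by omega) (by omega) (by omega) (by omega)
    (by omega) (by omega) he h2

/-- chord edge is good -/
theorem RP.gd (h : RP G X m p j q) (hc : IsCub G) {d : ℕ} (hjd : j ≤ d) (h1 : 1 ≤ d)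
    (hd : d + 2 < m) (ha : G.Adj (q (m-1)) (q d)) : Nn G X (q d) ∧ Nn G X (q (d+1)) :=
  ⟨Or.inr (h.1.chord_notOut hc h1 hd ha), (h.er hjd (by omega) ha).nn⟩

theorem HP.rp (h : HP G X m p) : RP G X m p j p := ⟨h, fun _ _ => rfl⟩

theorem RP.trans {r : ℕ → V} (h : RP G X m q j r) (h' : RP G X m p j q) : RP G X m p j r :=
  ⟨h.1, fun i hi => by rw [h.2 i hi, h'.2 i hi]⟩

theorem ER.trans {w : V} (h : ER G X m q j w) (h' : RP G X m p j q) : ER G X m p j w := by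
  obtain ⟨r, hr, e⟩ := h
  exact ⟨r, hr.trans h', e⟩

end

section

variable {V : Type*} [DecidableEq V]
variable {G : SimpleGraph V} {X Y : Finset V} {m : ℕ} {p : ℕ → V}
variable {q : ℕ → V} {j : ℕ}
/-- conclusion of the lobe lemma -/
def LobeC (G : SimpleGraph V) (X : Finset V) (m : ℕ) (p : ℕ → V) (j : ℕ) : Prop :=
  ∃ (S : Finset V) (T : Finset ℕ), (∀ w ∈ S, ER G X m p j w ∧ Out G X w) ∧
    (∀ i ∈ T, j ≤ i ∧ i + 1 < m ∧ Gd G X p i) ∧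
    4 ≤ T.card + (if S.Nonempty then S.card + 1 else 0)

theorem card4 {a b c d : ℕ} (h1 : a ≠ b) (h2 : a ≠ c) (h3 : a ≠ d) (h4 : b ≠ c) (h5 : b ≠ d)
    (h6 : c ≠ d) : ({a, b, c, d} : Finset ℕ).card = 4 := by
  rw [Finset.card_insert_of_notMem, Finset.card_insert_of_notMem, Finset.card_pair h6]
  · simp [h4, h5]
  · simp [h1, h2, h3]

theorem lobe_four {a b c : ℕ} (h0 : Gd G X p j) (ha : Gd G X p a) (hb : Gd G X p b)
    (hc : Gd G X p c) (h1 : j < a) (h2 : j < b) (h3 : j < c) (hj : j + 1 < m)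
    (h1' : a + 1 < m) (h2' : b + 1 < m)
    (h3' : c + 1 < m) (hab : a ≠ b) (hac : a ≠ c) (hbc : b ≠ c) : LobeC G X m p j := by
  refine ⟨∅, {j, a, b, c}, by simp, ?_, ?_⟩
  · intro i hi
    simp only [Finset.mem_insert, Finset.mem_singleton] at hi
    rcases hi with rfl | rfl | rfl | rfl
    · exact ⟨le_refl _, hj, h0⟩
    · exact ⟨by omega, h1', ha⟩
    · exact ⟨by omega, h2', hb⟩
    · exact ⟨by omega, h3', hc⟩
  · rw [card4] <;> omega

theorem lobe_two {a : ℕ} {w : V} (h0 : Gd G X p j) (ha : Gd G X p a) (h1 : j < a)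
    (hj : j + 1 < m) (h1' : a + 1 < m) (hw : ER G X m p j w) (ho : Out G X w) :
    LobeC G X m p j := by
  refine ⟨{w}, {j, a}, ?_, ?_, ?_⟩
  · intro v hv
    rw [Finset.mem_singleton] at hv
    subst hv
    exact ⟨hw, ho⟩
  · intro i hi
    simp only [Finset.mem_insert, Finset.mem_singleton] at hi
    rcases hi with rfl | rfl
    · exact ⟨le_refl _, hj, h0⟩
    · exact ⟨by omega, h1', ha⟩
  · rw [Finset.card_pair (by omega)]
    simp

theorem lobe_chord (hc : IsCub G) (h : HP G X m p) (hj : j + 2 < m)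
    (ha : G.Adj (p (m-1)) (p j)) (hR : ∀ q, RP G X m p j q → ∀ i, i < j → ¬ G.Adj (q (m-1)) (p i))
    (ho : ¬ Out G X (p (m-1))) : ∃ d, j < d ∧ d + 2 < m ∧ G.Adj (p (m-1)) (p d) := by
  obtain ⟨d, h1, h2, h3, h4⟩ := h.third hc (a := m - 2) (b := j) ho (by omega) (by omega)
    (by omega) (h.adj' (by omega) (by omega)).symm ha
  have h5 : d ≠ m - 1 := by
    rintro rfl
    exact G.loopless.irrefl _ h4
  have h6 : ¬ d < j := fun hd => hR p h.rp d hd h4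
  exact ⟨d, by omega, by omega, h4⟩

/-- rotation at `d` followed by a rotation at a low index -/
theorem rot_rot_low (h : RP G X m p j q) {d e : ℕ} (hjd : j ≤ e) (hed : e < d) (hd : d + 1 < m)
    (ha : G.Adj (q (m-1)) (q d)) (hb : G.Adj (q (d+1)) (q e)) : ER G X m p j (q (e+1)) := by
  have h1 := h.rot (by omega) hd ha
  have h2 := h1.er (d := e) hjd (by omega) (by
    rw [rot_gt (by omega), rot_le (by omega)]
    convert hb using 2
    omega)
  rwa [rot_le (by omega)] at h2

/-- rotation at `d` followed by a rotation at a high index -/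
theorem rot_rot_high (h : RP G X m p j q) {d e : ℕ} (hjd : j ≤ d) (hed : d + 3 ≤ e)
    (hem : e < m)
    (ha : G.Adj (q (m-1)) (q d)) (hb : G.Adj (q (d+1)) (q e)) : ER G X m p j (q (e-1)) := by
  have h1 := h.rot hjd (by omega) ha
  have h2 := h1.er (d := m + d - e) (by omega) (by omega) (by
    rw [rot_gt (by omega), rot_gt (by omega)]
    convert hb using 2 <;> omega)
  rw [rot_gt (by omega)] at h2
  convert h2 using 2
  omega

theorem rot_rot_high_N (hc : IsCub G) (h : RP G X m p j q) {d e : ℕ} (hjd : j ≤ d)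
    (hed : d + 3 ≤ e) (hd : e + 1 < m) (hb : G.Adj (q (d+1)) (q e)) : ¬ Out G X (q e) :=
  h.1.notOut hc (a := e-1) (b := e+1) (c := d+1) (h.1.adj' (by omega) (by omega)).symm
    (h.1.adj' (by omega) (by omega)) hb.symm (by omega) (by omega) (by omega) (by omega)
    (by omega) (by omega)

theorem rot_adj (_h : HP G X m p) {a b : ℕ} (haj : j < a) (hbj : j < b)
    (hab : G.Adj (p a) (p b)) {a' b' : ℕ} (ham : a < m) (hbm : b < m) (ha' : a' = m + j - a)
    (hb' : b' = m + j - b) : G.Adj (rot p m j a') (rot p m j b') := by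
  subst ha' hb'
  rw [rot_gt (by omega), rot_gt (by omega)]
  convert hab using 2 <;> omega

set_option maxHeartbeats 1000000 in
theorem lobe (hc : IsCub G) (h : HP G X m p) (hj1 : 1 ≤ j) (hj : j + 2 < m)
    (ha : G.Adj (p (m-1)) (p j))
    (hR : ∀ q, RP G X m p j q → ∀ i, i < j → ¬ G.Adj (q (m-1)) (p i)) : LobeC G X m p j := by
  have hp' : RP G X m p j (rot p m j) := h.rp.rot (le_refl _) (by omega) ha
  have ea : rot p m j (m-1) = p (j+1) := by rw [rot_gt (by omega)]; congr 1; omega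
  have eb : rot p m j j = p j := rot_le (le_refl _)
  have ha' : G.Adj (rot p m j (m-1)) (rot p m j j) := by
    rw [ea, eb]; exact (h.adj j (by omega)).symm
  have hR' : ∀ q, RP G X m (rot p m j) j q →
      ∀ i, i < j → ¬ G.Adj (q (m-1)) (rot p m j i) := by
    intro q hq i hi
    rw [rot_le (by omega)]
    exact hR q (hq.trans hp') i hi
  have E1 : ER G X m p j (p (m-1)) := ⟨p, h.rp, rfl⟩
  have E2 : ER G X m p j (p (j+1)) := h.rp.er (le_refl _) (by omega) ha
  have Nj : ¬ Out G X (p j) := h.chord_notOut hc hj1 hj ha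
  have G0 : Gd G X p j := ⟨Or.inr Nj, E2.nn⟩
  have onlyj : ∀ e, e < m → G.Adj (p j) (p e) → e = j - 1 ∨ e = j + 1 ∨ e = m - 1 :=
    fun e he => h.chord_only hc hj1 hj ha he
  -- chords
  have C1 : ¬ Out G X (p (m-1)) → ∃ d, j < d ∧ d + 2 < m ∧ G.Adj (p (m-1)) (p d) :=
    lobe_chord hc h hj ha hR
  have C2 : ¬ Out G X (p (j+1)) → ∃ e, j + 3 ≤ e ∧ e < m ∧ G.Adj (p (j+1)) (p e) := by
    intro ho
    obtain ⟨d, h1, h2, h3⟩ := lobe_chord hc hp'.1 hj ha' hR' (by rwa [ea])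
    rw [ea, rot_gt h1] at h3
    exact ⟨_, by omega, by omega, h3⟩
  have D1 : ∀ d, j < d → d + 2 < m → G.Adj (p (m-1)) (p d) →
      ER G X m p j (p (d+1)) ∧ Gd G X p d := fun d h1 h2 h3 =>
    ⟨h.rp.er (by omega) (by omega) h3, h.rp.gd hc (j := j) (by omega) (by omega) h2 h3⟩
  have D2 : ∀ e, j + 3 ≤ e → e < m → G.Adj (p (j+1)) (p e) →
      ER G X m p j (p (e-1)) ∧ Gd G X p (e-1) := by
    intro e h1 h2 h3
    have hE := rot_rot_high (j := j) (q := p) h.rp (le_refl j) h1 h2 ha h3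
    refine ⟨hE, hE.nn, ?_⟩
    have ee : e - 1 + 1 = e := by omega
    rw [ee]
    by_cases he : e + 1 < m
    · exact Or.inr (rot_rot_high_N hc h.rp (le_refl j) h1 he h3)
    · have : e = m - 1 := by omega
      rw [this]; exact E1.nn
  by_cases o1 : Out G X (p (m-1))
  · by_cases o2 : Out G X (p (j+1))
    · refine ⟨{p (m-1), p (j+1)}, {j}, ?_, ?_, ?_⟩
      · intro w hw
        simp only [Finset.mem_insert, Finset.mem_singleton] at hw
        rcases hw with rfl | rfl
        · exact ⟨E1, o1⟩
        · exact ⟨E2, o2⟩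
      · intro i hi
        rw [Finset.mem_singleton] at hi
        subst hi
        exact ⟨le_refl _, by omega, G0⟩
      · rw [Finset.card_pair (h.ne (by omega) (by omega) (by omega))]
        simp
    · obtain ⟨e, h1, h2, h3⟩ := C2 o2
      exact lobe_two G0 (D2 e h1 h2 h3).2 (by omega) (by omega) (by omega) E1 o1
  · obtain ⟨d, hd1, hd2, hd3⟩ := C1 o1
    obtain ⟨Ed, Gdd⟩ := D1 d hd1 hd2 hd3
    by_cases o2 : Out G X (p (j+1))
    · exact lobe_two G0 Gdd (by omega) (by omega) (by omega) E2 o2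
    · obtain ⟨e, he1, he2, he3⟩ := C2 o2
      obtain ⟨Ee, Gde⟩ := D2 e he1 he2 he3
      have onlym : ∀ c, c < m → G.Adj (p (m-1)) (p c) → c = m - 2 ∨ c = j ∨ c = d :=
        fun c hcm h4 => h.only hc (v := p (m-1)) (a := m-2) (b := j) (c := d)
          (h.adj' (by omega) (by omega)).symm ha hd3 (by omega) (by omega) (by omega) (by omega)
          (by omega) (by omega) hcm h4
      have onlyj1 : ∀ c, c < m → G.Adj (p (j+1)) (p c) → c = j ∨ c = j + 2 ∨ c = e :=
        fun c hcm h4 => h.only hc (v := p (j+1)) (a := j) (b := j+2) (c := e)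
          (h.adj' (by omega) (by omega)).symm (h.adj' (by omega) (by omega)) he3
          (by omega) (by omega) (by omega) (by omega)
          (by omega) (by omega) hcm h4
      -- third neighbour of p (d+1)
      have third : ¬ Out G X (p (d+1)) → ∃ g, j < g ∧ g < m ∧ g ≠ d ∧ g ≠ d + 1 ∧ g ≠ d + 2 ∧
          g ≠ m - 1 ∧ G.Adj (p (d+1)) (p g) := by
        intro ho
        obtain ⟨g, h1, h2, h3, h4⟩ := h.third hc (v := p (d+1)) (a := d) (b := d+2) ho (by omega)
          (by omega) (by omega) (h.adj' (by omega) (by omega)).symm (h.adj' (by omega) (by omega))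
        have h5 : g ≠ d + 1 := by
          rintro rfl
          exact G.loopless.irrefl _ h4
        have h6 : ¬ g < j := by
          intro hg
          refine hR _ (h.rp.rot (d := d) (by omega) (by omega) hd3) g hg ?_
          rw [rot_gt (by omega)]
          convert h4 using 2
          omega
        have h7 : g ≠ j := by
          rintro rfl
          have := onlyj _ (by omega) h4.symm
          omega
        have h8 : g ≠ m - 1 := by
          rintro rfl
          have := onlym _ (by omega) h4.symm
          omega
        exact ⟨g, by omega, h1, h2, h5, h3, h8, h4⟩
      by_cases hα : d = j + 1
      · subst hα
        have : e = m - 1 := by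
          have := onlyj1 (m-1) (by omega) hd3.symm
          omega
        subst this
        by_cases o3 : Out G X (p (j+1+1))
        · exact lobe_two G0 Gdd (by omega) (by omega) (by omega) Ed o3
        · obtain ⟨g, h1, h2, h3, h4, h5, h6, h7⟩ := third o3
          have hE := rot_rot_high (j := j) (q := p) h.rp (d := j+1) (e := g) (by omega) (by omega)
            (by omega) hd3 h7
          have hN := rot_rot_high_N (q := p) hc h.rp (j := j) (d := j+1) (e := g) (by omega)
            (by omega) (by omega) h7
          have hG : Gd G X p (g-1) := ⟨hE.nn, by
            have ee : g - 1 + 1 = g := by omega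
            rw [ee]; exact Or.inr hN⟩
          exact lobe_four G0 Gdd Gde hG (by omega) (by omega) (by omega) (by omega) (by omega)
            (by omega) (by omega) (by omega) (by omega) (by omega)
      · by_cases hβ : e = d + 1
        · subst hβ
          have hE1 := rot_rot_low (j := j) (q := p) h.rp (d := d) (e := j+1) (by omega) (by omega)
            (by omega) hd3 he3.symm
          have hE2 := rot_rot_low (q := rot p m j) hp' (d := m + j - (d+1)) (e := j+1) (by omega)
            (by omega) (by omega)
            (rot_adj h (by omega) (by omega) he3 (by omega) (by omega) (by omega) (by omega))
            (rot_adj h (a := d) (b := m-1) (by omega) (by omega) hd3.symm (by omega) (by omega)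
              (by omega) (by omega))
          rw [rot_gt (by omega)] at hE2
          have g1 : Gd G X p (j+1) := ⟨E2.nn, hE1.nn⟩
          have g2 : Gd G X p (m-2) := by
            constructor
            · convert hE2.nn using 2; omega
            · convert E1.nn using 2; omega
          exact lobe_four G0 g1 Gdd g2 (by omega) (by omega) (by omega) (by omega) (by omega)
            (by omega) (by omega) (by omega) (by omega) (by omega)
        · by_cases o3 : Out G X (p (d+1))
          · exact lobe_two G0 Gdd (by omega) (by omega) (by omega) Ed o3
          · obtain ⟨g, h1, h2, h3, h4, h5, h6, h7⟩ := third o3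
            have hgj1 : g ≠ j + 1 := by
              rintro rfl
              have := onlyj1 _ (by omega) h7.symm
              omega
            by_cases hgd : g < d
            · have hE := rot_rot_low (j := j) (q := p) h.rp (d := d) (e := g) (by omega) (by omega)
                (by omega) hd3 h7
              have hN : ¬ Out G X (p g) := h.notOut hc (a := g-1) (b := g+1) (c := d+1)
                (h.adj' (by omega) (by omega)).symm
                (h.adj' (by omega) (by omega)) h7.symm (by omega) (by omega) (by omega) (by omega)
                (by omega) (by omega)
              have hG : Gd G X p g := ⟨Or.inr hN, hE.nn⟩
              by_cases hge : g = e - 1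
              · -- two rotations, then a third
                have r1 := h.rp.rot (j := j) (d := d) (by omega) (by omega) hd3
                have r2 := rot_rot_low (q := rot p m d) (d := g) (e := j+1) r1 (by omega)
                  (by omega) (by omega) (by
                    rw [rot_gt (by omega), rot_le (by omega)]
                    convert h7 using 2; omega) (by
                    rw [rot_le (by omega), rot_le (by omega)]
                    convert he3.symm using 2; omega)
                rw [rot_le (by omega)] at r2
                have g1 : Gd G X p (j+1) := ⟨E2.nn, r2.nn⟩
                exact lobe_four G0 g1 Gdd Gde (by omega) (by omega) (by omega) (by omega)
                  (by omega) (by omega) (by omega) (by omega) (by omega) (by omega)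
              · exact lobe_four G0 hG Gdd Gde (by omega) (by omega) (by omega) (by omega)
                  (by omega) (by omega) (by omega) (by omega) (by omega) (by omega)
            · have hE := rot_rot_high (j := j) (q := p) h.rp (d := d) (e := g) (by omega) (by omega)
                (by omega) hd3 h7
              have hN := rot_rot_high_N (q := p) hc h.rp (j := j) (d := d) (e := g) (by omega)
                (by omega) (by omega) h7
              have hG : Gd G X p (g-1) := ⟨hE.nn, by
                have ee : g - 1 + 1 = g := by omega
                rw [ee]; exact Or.inr hN⟩
              have hge : g ≠ e := by
                rintro rfl
                have := h.only hc (v := p g) (a := g-1) (b := g+1) (c := d+1)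
                  (h.adj' (by omega) (by omega)).symm
                  (h.adj' (by omega) (by omega)) h7.symm (by omega) (by omega) (by omega)
                  (by omega) (by omega) (by omega) (e := j+1) (by omega) he3.symm
                omega
              exact lobe_four G0 hG Gdd Gde (by omega) (by omega) (by omega) (by omega)
                  (by omega) (by omega) (by omega) (by omega) (by omega) (by omega)

end

section

variable {V : Type*} [DecidableEq V]
variable {G : SimpleGraph V} {X Y : Finset V} {m : ℕ} {p : ℕ → V}
variable {q : ℕ → V} {j : ℕ}
/-- A spanning theta subgraph of `X`: branch vertices `s`, `t` and three segments. -/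
structure Th (G : SimpleGraph V) (X : Finset V) (s t : V) (l : Fin 3 → ℕ) (f : Fin 3 → ℕ → V) :
    Prop where
  pos : ∀ k, 0 < l k
  inj : ∀ k i k' i', i < l k → i' < l k' → f k i = f k' i' → k = k' ∧ i = i'
  adj : ∀ k i, i + 1 < l k → G.Adj (f k i) (f k (i+1))
  ads : ∀ k, G.Adj s (f k 0)
  adt : ∀ k, G.Adj t (f k (l k - 1))
  st : s ≠ t
  ns : ∀ k i, i < l k → f k i ≠ s
  nt : ∀ k i, i < l k → f k i ≠ t
  mem : ∀ v, v ∈ X ↔ (v = s ∨ v = t ∨ ∃ k i, i < l k ∧ f k i = v)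

variable {s t : V} {l : Fin 3 → ℕ} {f : Fin 3 → ℕ → V}

theorem Th.flip (h : Th G X s t l f) : Th G X t s l (fun k i => f k (l k - 1 - i)) where
  pos := h.pos
  inj := by
    intro k i k' i' hi hi' e
    have h1 := h.pos k
    have h2 := h.pos k'
    obtain ⟨rfl, h4⟩ := h.inj _ _ _ _ (by omega) (by omega) e
    exact ⟨rfl, by omega⟩
  adj := by
    intro k i hi
    have := (h.adj k (l k - 1 - (i+1)) (by omega)).symm
    convert this using 2
    omega
  ads := fun k => by simpa using h.adt k
  adt := fun k => by simpa using h.ads k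
  st := h.st.symm
  ns := fun k i hi => h.nt k _ (by omega)
  nt := fun k i hi => h.ns k _ (by omega)
  mem := by
    intro v
    rw [h.mem v]
    have : (∃ k i, i < l k ∧ f k i = v) ↔ (∃ k i, i < l k ∧ f k (l k - 1 - i) = v) := by
      constructor
      · rintro ⟨k, i, hi, rfl⟩
        exact ⟨k, l k - 1 - i, by omega, by congr 1; omega⟩
      · rintro ⟨k, i, hi, rfl⟩
        exact ⟨k, l k - 1 - i, by omega, rfl⟩
    rw [this]
    tauto

/-- Hamiltonian path of a theta: first segment `a`, middle `b`, last `c`. -/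
def thp (s t : V) (l : Fin 3 → ℕ) (f : Fin 3 → ℕ → V) (a b c : Fin 3) (i : ℕ) : V :=
  if i < l a then f a (l a - 1 - i) else if i = l a then s else
  if i < l a + 1 + l b then f b (i - l a - 1) else if i = l a + 1 + l b then t else
  f c (l a + l b + l c + 1 - i)

theorem fin3_cases {a b c : Fin 3} (hab : a ≠ b) (hac : a ≠ c) (hbc : b ≠ c) (k : Fin 3) :
    k = a ∨ k = b ∨ k = c := by omega

theorem Th.hp (h : Th G X s t l f) {a b c : Fin 3} (hab : a ≠ b) (hac : a ≠ c) (hbc : b ≠ c) :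
    HP G X (l a + l b + l c + 2) (thp s t l f a b c) := by
  have pa := h.pos a
  have pb := h.pos b
  have pc := h.pos c
  constructor
  · omega
  · intro i i' hi hi' e
    simp only [thp] at e
    split_ifs at e <;>
      first
      | omega
      | exact absurd e (h.ns _ _ (by omega))
      | exact absurd e (h.nt _ _ (by omega))
      | exact absurd e.symm (h.ns _ _ (by omega))
      | exact absurd e.symm (h.nt _ _ (by omega))
      | exact absurd e h.st
      | exact absurd e.symm h.st
      | (obtain ⟨h1, h2⟩ := h.inj _ _ _ _ (by omega) (by omega) e
         omega)
  · intro i hi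
    have adj' : ∀ k x y, y = x + 1 → y < l k → G.Adj (f k x) (f k y) := by
      rintro k x y rfl hy
      exact h.adj k x hy
    have e0 : ∀ k x, x = 0 → G.Adj s (f k x) := by rintro k x rfl; exact h.ads k
    have e1 : ∀ k x, x = l k - 1 → G.Adj t (f k x) := by rintro k x rfl; exact h.adt k
    simp only [thp]
    split_ifs <;>
      first
      | omega
      | exact adj' _ _ _ (by omega) (by omega)
      | exact (adj' _ _ _ (by omega) (by omega)).symm
      | exact e0 _ _ (by omega)
      | exact e1 _ _ (by omega)
      | exact (e0 _ _ (by omega)).symm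
      | exact (e1 _ _ (by omega)).symm
  · intro v
    rw [h.mem v]
    constructor
    · rintro (rfl | rfl | ⟨k, i, hi, rfl⟩)
      · exact ⟨l a, by omega, by simp [thp]⟩
      · exact ⟨l a + 1 + l b, by omega, by
          unfold thp
          rw [if_neg (by omega), if_neg (by omega), if_neg (by omega), if_pos rfl]⟩
      · rcases fin3_cases hab hac hbc k with rfl | rfl | rfl
        · refine ⟨l k - 1 - i, by omega, ?_⟩
          unfold thp
          rw [if_pos (by omega)]
          congr 1; omega
        · refine ⟨l a + 1 + i, by omega, ?_⟩
          unfold thp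
          rw [if_neg (by omega), if_neg (by omega), if_pos (by omega)]
          congr 1; omega
        · refine ⟨l a + l b + l k + 1 - i, by omega, ?_⟩
          unfold thp
          rw [if_neg (by omega), if_neg (by omega), if_neg (by omega), if_neg (by omega)]
          congr 1; omega
    · rintro ⟨i, hi, rfl⟩
      unfold thp
      split_ifs
      · exact Or.inr (Or.inr ⟨a, _, by omega, rfl⟩)
      · exact Or.inl rfl
      · exact Or.inr (Or.inr ⟨b, _, by omega, rfl⟩)
      · exact Or.inr (Or.inl rfl)
      · exact Or.inr (Or.inr ⟨c, _, by omega, rfl⟩)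

section vals
variable {a b c : Fin 3} {i : ℕ}
theorem thp_a (hi : i < l a) : thp s t l f a b c (l a - 1 - i) = f a i := by
  unfold thp
  rw [if_pos (by omega)]
  congr 1; omega

theorem thp_b (hi : i < l b) : thp s t l f a b c (l a + 1 + i) = f b i := by
  unfold thp
  rw [if_neg (by omega), if_neg (by omega), if_pos (by omega)]
  congr 1; omega

theorem thp_c (hi : i < l c) : thp s t l f a b c (l a + l b + l c + 1 - i) = f c i := by
  unfold thp
  rw [if_neg (by omega), if_neg (by omega), if_neg (by omega), if_neg (by omega)]
  congr 1; omega

theorem thp_s : thp s t l f a b c (l a) = s := by simp [thp]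

theorem thp_t : thp s t l f a b c (l a + 1 + l b) = t := by
  unfold thp
  rw [if_neg (by omega), if_neg (by omega), if_neg (by omega), if_pos rfl]
end vals

theorem fin3_third {a b : Fin 3} (hab : a ≠ b) : ∃ c, a ≠ c ∧ b ≠ c := by
  revert a b; decide

theorem Th.enS (h : Th G X s t l f) (k : Fin 3) : En G X (f k 0) := by
  obtain ⟨a, b, h1, h2, h3⟩ : ∃ a b : Fin 3, a ≠ b ∧ a ≠ k ∧ b ≠ k := by revert k; decide
  have := (h.hp h1 h2 h3).en
  have e := thp_c (s := s) (t := t) (f := f) (a := a) (b := b) (h.pos k)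
  rw [← e]
  convert this using 2
  omega

theorem Th.enT (h : Th G X s t l f) (k : Fin 3) : En G X (f k (l k - 1)) := by
  simpa using h.flip.enS k

/-- no edge from a t-end to an s-end of another segment -/
theorem Th.noTS (h : Th G X s t l f) (hf : ¬ Full G X) {k k' : Fin 3} (hk : k ≠ k') :
    ¬ G.Adj (f k (l k - 1)) (f k' 0) := by
  intro ha
  obtain ⟨r, h1, h2⟩ := fin3_third hk
  have hp := h.hp (a := k) (b := r) (c := k') h1 hk h2.symm
  apply hf
  apply hp.full_of_cycle
  have p1 := h.pos k
  have e := thp_c (s := s) (t := t) (f := f) (a := k) (b := r) (h.pos k')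
  have e2 := thp_a (s := s) (t := t) (f := f) (a := k) (b := r) (c := k') (i := l k - 1) (l := l) (by omega)
  have e3 : l k - 1 - (l k - 1) = 0 := by omega
  rw [e3] at e2
  rw [e2]
  have e4 : l k + l r + l k' + 2 - 1 = l k + l r + l k' + 1 - 0 := by omega
  rw [e4, e]
  exact ha.symm

/-- chord from s-end of `k'` to `f k c`: successors -/
theorem Th.succ1 (h : Th G X s t l f) {k k' : Fin 3} (hk : k ≠ k') {c : ℕ} (hcl : c + 1 < l k)
    (ha : G.Adj (f k' 0) (f k c)) : En G X (f k (c+1)) := by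
  obtain ⟨r, h1, h2⟩ := fin3_third hk
  have hp := h.hp (a := r) (b := k) (c := k') h1.symm h2.symm hk
  have p1 := h.pos k'
  have e := thp_c (s := s) (t := t) (f := f) (a := r) (b := k) (h.pos k')
  have e1 := thp_b (s := s) (t := t) (f := f) (a := r) (b := k) (c := k') (i := c) (l := l) (by omega)
  have e2 := thp_b (s := s) (t := t) (f := f) (a := r) (b := k) (c := k') (i := c+1) (l := l) hcl
  have hr := (hp.rot (d := l r + 1 + c) (by omega) (by
    rw [e1]
    have e4 : l r + l k + l k' + 2 - 1 = l r + l k + l k' + 1 - 0 := by omega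
    rw [e4, e]
    exact ha)).en
  rw [rot_gt (by omega)] at hr
  rw [← e2]
  convert hr using 2
  omega

theorem Th.pred1 (h : Th G X s t l f) {k k' : Fin 3} (hk : k ≠ k') {c : ℕ} (hc0 : 0 < c)
    (hcl : c < l k)
    (ha : G.Adj (f k' 0) (f k c)) : En G X (f k (c-1)) := by
  obtain ⟨r, h1, h2⟩ := fin3_third hk
  have hp := h.hp (a := k) (b := r) (c := k') h1 hk h2.symm
  have p1 := h.pos k'
  have e := thp_c (s := s) (t := t) (f := f) (a := k) (b := r) (h.pos k')
  have e1 := thp_a (s := s) (t := t) (f := f) (a := k) (b := r) (c := k') (i := c) (l := l) (by omega)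
  have e2 := thp_a (s := s) (t := t) (f := f) (a := k) (b := r) (c := k') (i := c-1) (l := l)
    (by omega)
  have hr := (hp.rot (d := l k - 1 - c) (by omega) (by
    rw [e1]
    have e4 : l k + l r + l k' + 2 - 1 = l k + l r + l k' + 1 - 0 := by omega
    rw [e4, e]
    exact ha)).en
  rw [rot_gt (by omega)] at hr
  rw [← e2]
  convert hr using 2
  omega

/-- HP ending in the segment `k` -/
theorem Th.hpc (h : Th G X s t l f) (k : Fin 3) : ∃ m q, HP G X m q ∧ l k + 4 ≤ m ∧
    ∀ i, i < l k → q (m - 1 - i) = f k i := by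
  obtain ⟨a, b, h1, h2, h3⟩ : ∃ a b : Fin 3, a ≠ b ∧ a ≠ k ∧ b ≠ k := by revert k; decide
  have pa := h.pos a
  have pb := h.pos b
  refine ⟨_, _, h.hp h1 h2 h3, by omega, ?_⟩
  intro i hi
  rw [← thp_c (s := s) (t := t) (f := f) (a := a) (b := b) hi]
  congr 1

/-- chord inside own segment -/
theorem Th.own1 (h : Th G X s t l f) {k : Fin 3} {c : ℕ} (hc0 : 0 < c)
    (hcl : c < l k) (ha : G.Adj (f k 0) (f k c)) : En G X (f k (c-1)) := by
  obtain ⟨m, q, hq, hm, hv⟩ := h.hpc k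
  have p1 := h.pos k
  have e0 := hv 0 p1
  rw [Nat.sub_zero] at e0
  have e1 := hv c hcl
  have e2 := hv (c-1) (by omega)
  have hr := (hq.rot (d := m-1-c) (by omega) (by rw [e0, e1]; exact ha)).en
  rw [rot_gt (by omega)] at hr
  rw [← e2]
  convert hr using 2
  omega

theorem Th.own2 (h : Th G X s t l f) {k : Fin 3} {c : ℕ} (hc0 : 0 < c)
    (hcl : c + 1 < l k) (ha : G.Adj (f k 0) (f k c)) (hb : G.Adj (f k (l k - 1)) (f k (c-1))) :
    En G X (f k (l k - 2)) := by
  obtain ⟨m, q, hq, hm, hv⟩ := h.hpc k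
  have p1 := h.pos k
  have e0 := hv 0 p1
  rw [Nat.sub_zero] at e0
  have e1 := hv c (by omega)
  have e2 := hv (c-1) (by omega)
  have e3 := hv (l k - 1) (by omega)
  have e4 := hv (l k - 2) (by omega)
  have hr := (rot_rot_low (j := 0) hq.rp (d := m-1-c) (e := m - 1 - (l k - 1)) (by omega) (by omega)
    (by omega) (by rw [e0, e1]; exact ha) (by
      rw [e3]
      have : m - 1 - c + 1 = m - 1 - (c-1) := by omega
      rw [this, e2]
      exact hb.symm)).en
  rw [← e4]
  convert hr using 2
  omega

end

section

variable {V : Type*} [DecidableEq V]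
variable {G : SimpleGraph V} {X Y : Finset V} {m : ℕ} {p : ℕ → V}
variable {q : ℕ → V} {j : ℕ}
variable {s t : V} {l : Fin 3 → ℕ} {f : Fin 3 → ℕ → V}
open Classical in
/-- good inner edges of segment `k` -/
noncomputable def Ig (G : SimpleGraph V) (X : Finset V) (l : Fin 3 → ℕ) (f : Fin 3 → ℕ → V)
    (k : Fin 3) : Finset ℕ :=
  (Finset.range (l k)).filter (fun i => i + 1 < l k ∧ Nn G X (f k i) ∧ Nn G X (f k (i+1)))

theorem mem_Ig {k : Fin 3} {i : ℕ} :
    i ∈ Ig G X l f k ↔ (i + 1 < l k ∧ Nn G X (f k i) ∧ Nn G X (f k (i+1))) := by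
  classical
  simp only [Ig, Finset.mem_filter, Finset.mem_range]
  constructor
  · exact fun h => h.2
  · exact fun h => ⟨by omega, h⟩

theorem mem_Ig_flip {k : Fin 3} {i : ℕ} (hi : i + 1 < l k)
    (h : i ∈ Ig G X l (fun k i => f k (l k - 1 - i)) k) : l k - 2 - i ∈ Ig G X l f k := by
  rw [mem_Ig] at h ⊢
  obtain ⟨h1, h2, h3⟩ := h
  refine ⟨by omega, ?_, ?_⟩
  · convert h3 using 2
    omega
  · convert h2 using 2
    omega

theorem Th.memS (h : Th G X s t l f) {k : Fin 3} {i : ℕ} (hi : i < l k) : f k i ∈ X :=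
  (h.mem _).2 (Or.inr (Or.inr ⟨k, i, hi, rfl⟩))

theorem Th.fne (h : Th G X s t l f) {k k' : Fin 3} {i i' : ℕ} (hi : i < l k) (hi' : i' < l k')
    (hne : ¬ (k = k' ∧ i = i')) : f k i ≠ f k' i' := fun e => hne (h.inj _ _ _ _ hi hi' e)

theorem IsCub.notOut (hc : IsCub G) {v a b c : V} (ha : G.Adj v a) (hb : G.Adj v b)
    (hcc : G.Adj v c) (hab : a ≠ b) (hac : a ≠ c) (hbc : b ≠ c) (h1 : a ∈ X) (h2 : b ∈ X)
    (h3 : c ∈ X) : ¬ Out G X v := by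
  rintro ⟨w, hw, hwX⟩
  rcases hc.only ha hb hcc hab hac hbc hw with rfl | rfl | rfl
  · exact hwX h1
  · exact hwX h2
  · exact hwX h3

theorem Th.s_notOut (h : Th G X s t l f) (hc : IsCub G) : ¬ Out G X s :=
  hc.notOut (h.ads 0) (h.ads 1) (h.ads 2)
    (h.fne (h.pos _) (h.pos _) (by simp)) (h.fne (h.pos _) (h.pos _) (by simp))
    (h.fne (h.pos _) (h.pos _) (by simp)) (h.memS (h.pos _)) (h.memS (h.pos _)) (h.memS (h.pos _))

theorem Th.s_only (h : Th G X s t l f) (hc : IsCub G) {k : Fin 3} {i : ℕ} (hi : i < l k)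
    (ha : G.Adj s (f k i)) : i = 0 := by
  have := hc.only (h.ads 0) (h.ads 1) (h.ads 2)
    (h.fne (h.pos _) (h.pos _) (by simp)) (h.fne (h.pos _) (h.pos _) (by simp))
    (h.fne (h.pos _) (h.pos _) (by simp)) ha
  rcases this with e | e | e
  · exact (h.inj _ _ _ _ hi (h.pos _) e).2
  · exact (h.inj _ _ _ _ hi (h.pos _) e).2
  · exact (h.inj _ _ _ _ hi (h.pos _) e).2

/-- the three chord types at an s-end -/
theorem Th.triS (h : Th G X s t l f) (hc : IsCub G) (hf : ¬ Full G X) (k : Fin 3)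
    (ho : ¬ Out G X (f k 0)) :
    (∃ k' c, k' ≠ k ∧ 0 < c ∧ c + 1 < l k' ∧ G.Adj (f k 0) (f k' c)) ∨
    (∃ k', k' ≠ k ∧ 2 ≤ l k ∧ 2 ≤ l k' ∧ G.Adj (f k 0) (f k' 0)) ∨
    (∃ c, 2 ≤ c ∧ c < l k ∧ G.Adj (f k 0) (f k c)) := by
  have hk := h.pos k
  have key : ∃ w, w ∈ X ∧ w ≠ s ∧ w ≠ t ∧ (2 ≤ l k → w ≠ f k 1) ∧ G.Adj (f k 0) w := by
    by_cases hl : 2 ≤ l k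
    · obtain ⟨w, h1, h2, h3⟩ := hc.third (h.ads k).symm (h.adj k 0 (by omega))
        (h.ns k 1 (by omega)).symm
      refine ⟨w, by_contra fun hw => ho ⟨w, h3, hw⟩, h1, ?_, fun _ => h2, h3⟩
      rintro rfl
      have := h.flip.s_only hc (k := k) (i := l k - 1) (by omega) (by simpa using h3.symm)
      omega
    · have e : l k - 1 = 0 := by omega
      have h0 := h.adt k
      rw [e] at h0
      obtain ⟨w, h1, h2, h3⟩ := hc.third (h.ads k).symm h0.symm h.st
      exact ⟨w, by_contra fun hw => ho ⟨w, h3, hw⟩, h1, h2, fun h => absurd h hl, h3⟩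
  obtain ⟨w, hw, hs, ht, h1, ha⟩ := key
  rcases (h.mem w).1 hw with rfl | rfl | ⟨k', c, hcl, rfl⟩
  · exact absurd rfl hs
  · exact absurd rfl ht
  · by_cases hkk : k' = k
    · subst hkk
      right; right
      refine ⟨c, ?_, hcl, ha⟩
      have : c ≠ 0 := by
        rintro rfl
        exact G.loopless.irrefl _ ha
      by_contra hlt
      have : c = 1 := by omega
      subst this
      exact h1 (by omega) rfl
    · have n1 := h.noTS hf hkk
      have n2 := h.noTS hf (Ne.symm hkk)
      by_cases hc0 : c = 0
      · subst hc0
        right; left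
        refine ⟨k', hkk, ?_, ?_, ha⟩
        · by_contra hlt
          have e : l k - 1 = 0 := by omega
          rw [e] at n2
          exact n2 ha
        · by_contra hlt
          have e : l k' - 1 = 0 := by omega
          rw [e] at n1
          exact n1 ha.symm
      · left
        refine ⟨k', c, hkk, by omega, ?_, ha⟩
        by_contra hlt
        have e : l k' - 1 = c := by omega
        rw [e] at n1
        exact n1 ha.symm

theorem Th.triT (h : Th G X s t l f) (hc : IsCub G) (hf : ¬ Full G X) (k : Fin 3)
    (ho : ¬ Out G X (f k (l k - 1))) :
    (∃ k' c, k' ≠ k ∧ 0 < c ∧ c + 1 < l k' ∧ G.Adj (f k (l k - 1)) (f k' c)) ∨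
    (∃ k', k' ≠ k ∧ 2 ≤ l k ∧ 2 ≤ l k' ∧ G.Adj (f k (l k - 1)) (f k' (l k' - 1))) ∨
    (∃ c, c + 2 < l k ∧ G.Adj (f k (l k - 1)) (f k c)) := by
  rcases h.flip.triS hc hf k (by simpa using ho) with
    ⟨k', c, h1, h2, h3, h4⟩ | ⟨k', h1, h2, h3, h4⟩ | ⟨c, h1, h2, h3⟩
  · exact Or.inl ⟨k', l k' - 1 - c, h1, by omega, by omega, h4⟩
  · exact Or.inr (Or.inl ⟨k', h1, h2, h3, h4⟩)
  · exact Or.inr (Or.inr ⟨l k - 1 - c, by omega, h3⟩)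

/-- receivers of type (a) -/
theorem Th.recvS (h : Th G X s t l f) (hc : IsCub G) {k k' : Fin 3} {c : ℕ} (hk : k' ≠ k)
    (h0 : 0 < c) (h1 : c + 1 < l k') (ha : G.Adj (f k 0) (f k' c)) :
    c - 1 ∈ Ig G X l f k' ∧ c ∈ Ig G X l f k' := by
  have hno : ¬ Out G X (f k' c) := by
    have e : c - 1 + 1 = c := by omega
    have a1 := (h.adj k' (c-1) (by omega)).symm
    rw [e] at a1
    exact hc.notOut a1 (h.adj k' c h1) ha.symm
      (h.fne (by omega) (by omega) (by omega)) (h.fne (by omega) (h.pos _) (by omega))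
      (h.fne (by omega) (h.pos _) (by omega)) (h.memS (by omega)) (h.memS (by omega))
      (h.memS (h.pos _))
  have e1 := h.succ1 hk h1 ha
  have e2 := h.pred1 hk h0 (by omega) ha
  refine ⟨mem_Ig.2 ⟨by omega, Or.inl e2, Or.inr ?_⟩, mem_Ig.2 ⟨h1, Or.inr hno, Or.inl e1⟩⟩
  have e : c - 1 + 1 = c := by omega
  rwa [e]

def IsE (l : Fin 3 → ℕ) (f : Fin 3 → ℕ → V) (k : Fin 3) (x : V) : Prop :=
  x = f k 0 ∨ x = f k (l k - 1)

theorem Th.recv (h : Th G X s t l f) (hc : IsCub G) {k k' : Fin 3} {c : ℕ} {x : V}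
    (hx : IsE l f k x) (hk : k' ≠ k)
    (h0 : 0 < c) (h1 : c + 1 < l k') (ha : G.Adj x (f k' c)) :
    c - 1 ∈ Ig G X l f k' ∧ c ∈ Ig G X l f k' := by
  rcases hx with rfl | rfl
  · exact h.recvS hc hk h0 h1 ha
  · have := h.flip.recvS hc (k := k) (k' := k') (c := l k' - 1 - c) hk (by omega) (by omega) (by
      convert ha using 2
      · simp
      · omega)
    obtain ⟨h2, h3⟩ := this
    have h2 := mem_Ig_flip (by omega) h2
    have h3 := mem_Ig_flip (by omega) h3
    constructor
    · convert h3 using 1; omega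
    · convert h2 using 1; omega

/-- `x` has no type (a) chord. -/
def NotA (G : SimpleGraph V) (l : Fin 3 → ℕ) (f : Fin 3 → ℕ → V) (k : Fin 3) (x : V) : Prop :=
  ∀ k' c, k' ≠ k → 0 < c → c + 1 < l k' → ¬ G.Adj x (f k' c)

theorem Th.bS (h : Th G X s t l f) {k k' : Fin 3} (hk : k' ≠ k) (h2 : 2 ≤ l k)
    (ha : G.Adj (f k 0) (f k' 0)) : 0 ∈ Ig G X l f k :=
  mem_Ig.2 ⟨by omega, Or.inl (h.enS k), Or.inl (h.succ1 hk.symm (by omega) ha.symm)⟩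

theorem Th.bT (h : Th G X s t l f) {k k' : Fin 3} (hk : k' ≠ k) (h2 : 2 ≤ l k)
    (ha : G.Adj (f k (l k - 1)) (f k' (l k' - 1))) : l k - 2 ∈ Ig G X l f k := by
  have := h.flip.bS hk h2 (by simpa using ha)
  simpa using mem_Ig_flip (by omega) this

theorem Th.cS (h : Th G X s t l f) (hc : IsCub G) {k : Fin 3} {c : ℕ} (h2 : 2 ≤ c)
    (hcl : c < l k) (ha : G.Adj (f k 0) (f k c)) : c - 1 ∈ Ig G X l f k := by
  have e : c - 1 + 1 = c := by omega
  refine mem_Ig.2 ⟨by omega, Or.inl (h.own1 (by omega) hcl ha), ?_⟩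
  rw [e]
  by_cases hl : c + 1 < l k
  · right
    have a1 := (h.adj k (c-1) (by omega)).symm
    rw [e] at a1
    exact hc.notOut a1 (h.adj k c hl) ha.symm
      (h.fne (by omega) (by omega) (by omega)) (h.fne (by omega) (h.pos _) (by omega))
      (h.fne (by omega) (h.pos _) (by omega)) (h.memS (by omega)) (h.memS (by omega))
      (h.memS (h.pos _))
  · left
    have : c = l k - 1 := by omega
    rw [this]
    exact h.enT k

theorem Th.cT (h : Th G X s t l f) (hc : IsCub G) {k : Fin 3} {c : ℕ} 
    (hcl : c + 2 < l k) (ha : G.Adj (f k (l k - 1)) (f k c)) : c ∈ Ig G X l f k := by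
  have := h.flip.cS hc (k := k) (c := l k - 1 - c) (by omega) (by omega) (by
    convert ha using 2
    · simp
    · omega)
  have := mem_Ig_flip (by omega) this
  convert this using 1; omega

theorem Th.B1 (h : Th G X s t l f) (hc : IsCub G) (hf : ¬ Full G X) {k : Fin 3} {x : V}
    (hx : IsE l f k x) (ho : ¬ Out G X x) (hA : NotA G l f k x) :
    1 ≤ (Ig G X l f k).card ∧ 2 ≤ l k := by
  rcases hx with rfl | rfl
  · rcases h.triS hc hf k ho with ⟨k', c, h1, h2, h3, h4⟩ | ⟨k', h1, h2, h3, h4⟩ | ⟨c, h1, h2, h3⟩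
    · exact absurd h4 (hA k' c h1 h2 h3)
    · exact ⟨Finset.card_pos.2 ⟨_, h.bS h1 h2 h4⟩, h2⟩
    · exact ⟨Finset.card_pos.2 ⟨_, h.cS hc h1 h2 h3⟩, by omega⟩
  · rcases h.triT hc hf k ho with ⟨k', c, h1, h2, h3, h4⟩ | ⟨k', h1, h2, h3, h4⟩ | ⟨c, h1, h2⟩
    · exact absurd h4 (hA k' c h1 h2 h3)
    · exact ⟨Finset.card_pos.2 ⟨_, h.bT h1 h2 h4⟩, h2⟩
    · exact ⟨Finset.card_pos.2 ⟨_, h.cT hc h1 h2⟩, by omega⟩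

theorem two_le_card {T : Finset ℕ} {a b : ℕ} (ha : a ∈ T) (hb : b ∈ T) (h : a ≠ b) :
    2 ≤ T.card := Finset.one_lt_card.2 ⟨a, ha, b, hb, h⟩

theorem Th.B2 (h : Th G X s t l f) (hc : IsCub G) (hf : ¬ Full G X) {k : Fin 3}
    (hl : 3 ≤ l k) (o1 : ¬ Out G X (f k 0)) (o2 : ¬ Out G X (f k (l k - 1)))
    (hA1 : NotA G l f k (f k 0)) (hA2 : NotA G l f k (f k (l k - 1))) :
    2 ≤ (Ig G X l f k).card := by
  have e1 : l k - 2 + 1 = l k - 1 := by omega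
  have a1 := h.adj k (l k - 2) (by omega)
  rw [e1] at a1
  have a0 := h.adj k 0 (by omega)
  -- degree contradictions
  have dS : ∀ k', k' ≠ k → G.Adj (f k 0) (f k' 0) → G.Adj (f k 0) (f k (l k - 1)) → False := by
    intro k' hk b1 b2
    rcases hc.only (h.ads k).symm a0 b1 (h.ns _ _ (by omega)).symm (h.ns _ _ (h.pos _)).symm
      (h.fne (by omega) (h.pos _) (by omega)) b2 with e | e | e
    · exact h.ns _ _ (by omega) e
    · have := (h.inj _ _ _ _ (by omega) (by omega) e).2
      omega
    · exact hk.symm (h.inj _ _ _ _ (by omega) (h.pos _) e).1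
  have dT : ∀ k', k' ≠ k → G.Adj (f k (l k - 1)) (f k' (l k' - 1)) →
      G.Adj (f k 0) (f k (l k - 1)) → False := by
    intro k' hk b1 b2
    have hp := h.pos k'
    rcases hc.only (h.adt k).symm a1.symm b1 (h.nt _ _ (by omega)).symm (h.nt _ _ (by omega)).symm
      (h.fne (by omega) (by omega) (by omega)) b2.symm with e | e | e
    · exact h.nt _ _ (by omega) e
    · have := (h.inj _ _ _ _ (by omega) (by omega) e).2
      omega
    · exact hk.symm (h.inj _ _ _ _ (by omega) (by omega) e).1
  rcases h.triS hc hf k o1 with ⟨k', c, h1, h2, h3, h4⟩ | ⟨k', h1, h2, h3, h4⟩ | ⟨c, h1, h2, h3⟩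
  · exact absurd h4 (hA1 k' c h1 h2 h3)
  · rcases h.triT hc hf k o2 with ⟨r, c, g1, g2, g3, g4⟩ | ⟨r, g1, g2, g3, g4⟩ | ⟨c, g1, g2⟩
    · exact absurd g4 (hA2 r c g1 g2 g3)
    · exact two_le_card (h.bS h1 h2 h4) (h.bT g1 g2 g4) (by omega)
    · refine two_le_card (h.bS h1 h2 h4) (h.cT hc g1 g2) ?_
      rintro rfl
      exact dS k' h1 h4 g2.symm
  · rcases h.triT hc hf k o2 with ⟨r, c', g1, g2, g3, g4⟩ | ⟨r, g1, g2, g3, g4⟩ | ⟨c', g1, g2⟩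
    · exact absurd g4 (hA2 r c' g1 g2 g3)
    · refine two_le_card (h.cS hc h1 h2 h3) (h.bT g1 g2 g4) ?_
      intro e
      have : c = l k - 1 := by omega
      subst this
      exact dT r g1 g4 h3
    · by_cases e : c - 1 = c'
      · subst e
        have hcl : c + 1 < l k := by omega
        have hE := h.own2 (by omega) hcl h3 g2
        refine two_le_card (h.cS hc h1 h2 h3) (b := l k - 2) (mem_Ig.2 ⟨by omega, Or.inl hE, ?_⟩)
          (by omega)
        rw [e1]
        exact Or.inl (h.enT k)
      · exact two_le_card (h.cS hc h1 h2 h3) (h.cT hc g1 g2) e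

theorem recv_card {T C : Finset ℕ} (hC : C.Nonempty)
    (h : ∀ c ∈ C, 0 < c ∧ c - 1 ∈ T ∧ c ∈ T) : C.card + 1 ≤ T.card := by
  have h1 := h _ (C.min'_mem hC)
  have h2 : C.min' hC - 1 ∉ C := by
    intro hm
    have := C.min'_le _ hm
    omega
  rw [← Finset.card_insert_of_notMem h2]
  apply Finset.card_le_card
  intro x hx
  rw [Finset.mem_insert] at hx
  rcases hx with rfl | hx
  · exact h1.2.1
  · exact (h x hx).2.2

theorem sum3 (F : Fin 3 → ℕ) {a b c : Fin 3} (hab : a ≠ b) (hac : a ≠ c) (hbc : b ≠ c) :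
    F 0 + F 1 + F 2 = F a + F b + F c := by
  fin_cases a <;> fin_cases b <;> fin_cases c <;> simp at hab hac hbc <;> simp <;> omega

end

section

variable {V : Type*} [DecidableEq V]
variable {G : SimpleGraph V} {X Y : Finset V} {m : ℕ} {p : ℕ → V}
variable {q : ℕ → V} {j : ℕ}
variable {s t : V} {l : Fin 3 → ℕ} {f : Fin 3 → ℕ → V}
theorem fin3_two : ∀ k : Fin 3, ∃ a b : Fin 3, a ≠ b ∧ a ≠ k ∧ b ≠ k := by decide

theorem Th.ise (h : Th G X s t l f) {k : Fin 3} {x : V} (hx : IsE l f k x) :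
    ∃ i, i < l k ∧ x = f k i := by
  have := h.pos k
  rcases hx with rfl | rfl
  · exact ⟨0, h.pos k, rfl⟩
  · exact ⟨l k - 1, by omega, rfl⟩

theorem Th.isEn (h : Th G X s t l f) {k : Fin 3} {x : V} (hx : IsE l f k x) : En G X x := by
  rcases hx with rfl | rfl
  · exact h.enS k
  · exact h.enT k

theorem Th.recv_ne (h : Th G X s t l f) (hc : IsCub G) {k k2 e : Fin 3} {c c2 : ℕ} {x x2 : V}
    (hx : IsE l f k x) (hx2 : IsE l f k2 x2) (hk : e ≠ k) (hk2 : e ≠ k2) (hne : x ≠ x2)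
    (h0 : 0 < c) (h1 : c + 1 < l e) (ha : G.Adj x (f e c)) (ha2 : G.Adj x2 (f e c2)) : c ≠ c2 := by
  rintro rfl
  obtain ⟨i, hi, rfl⟩ := h.ise hx
  obtain ⟨i2, hi2, rfl⟩ := h.ise hx2
  have ee : c - 1 + 1 = c := by omega
  have a1 := (h.adj e (c-1) (by omega)).symm
  rw [ee] at a1
  rcases hc.only a1 (h.adj e c h1) ha.symm (h.fne (by omega) (by omega) (by omega))
    (h.fne (by omega) hi (by omega)) (h.fne (by omega) hi (by omega)) ha2.symm with e | e | e
  · exact hk2 (h.inj _ _ _ _ hi2 (by omega) e).1.symm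
  · exact hk2 (h.inj _ _ _ _ hi2 (by omega) e).1.symm
  · exact hne e.symm

/-- The situation with two one-vertex segments. -/
theorem Th.special (h : Th G X s t l f) (hc : IsCub G) (hf : ¬ Full G X)
    {e a b : Fin 3} (hea : e ≠ a) (heb : e ≠ b) (hab : a ≠ b) (la : l a = 1) (lb : l b = 1)
    (ho : ¬ Out G X (f e 0)) (hA : NotA G l f e (f e 0)) {c c2 : ℕ} (h0 : 0 < c)
    (h1 : c2 + 1 < l e) (hcc : c < c2) (ha : G.Adj (f a 0) (f e c)) (hb : G.Adj (f b 0) (f e c2)) :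
    4 ≤ (Ig G X l f e).card := by
  obtain ⟨r1, r2⟩ := h.recvS hc hea h0 (by omega) ha
  obtain ⟨r3, r4⟩ := h.recvS hc heb (by omega) h1 hb
  have four : ∀ x y z w : ℕ, x ∈ Ig G X l f e → y ∈ Ig G X l f e → z ∈ Ig G X l f e →
      w ∈ Ig G X l f e → x ≠ y → x ≠ z → x ≠ w → y ≠ z → y ≠ w → z ≠ w →
      4 ≤ (Ig G X l f e).card := by
    intro x y z w hx hy hz hw d1 d2 d3 d4 d5 d6
    rw [← card4 d1 d2 d3 d4 d5 d6]
    apply Finset.card_le_card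
    intro v hv
    simp only [Finset.mem_insert, Finset.mem_singleton] at hv
    rcases hv with rfl | rfl | rfl | rfl <;> assumption
  by_cases hadj : c2 = c + 1
  · subst hadj
    rcases h.triS hc hf e ho with ⟨k', d, g1, g2, g3, g4⟩ | ⟨k', g1, g2, g3, g4⟩ | ⟨d, g1, g2, g3⟩
    · exact absurd g4 (hA k' d g1 g2 g3)
    · rcases fin3_cases hea heb hab k' with rfl | rfl | rfl
      · exact absurd rfl g1
      · omega
      · omega
    · have rd := h.cS hc g1 g2 g3
      have pe := h.pos e
      have d1 : d ≠ c := by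
        rintro rfl
        have ee : d - 1 + 1 = d := by omega
        have a1 := (h.adj e (d-1) (by omega)).symm
        rw [ee] at a1
        rcases hc.only a1 (h.adj e d (by omega)) ha.symm (h.fne (by omega) (by omega) (by omega))
          (h.fne (by omega) (h.pos _) (by omega)) (h.fne (by omega) (h.pos _) (by omega)) g3.symm
          with ee | ee | ee
        · have := (h.inj _ _ _ _ (by omega) (by omega) ee).2; omega
        · have := (h.inj _ _ _ _ (by omega) (by omega) ee).2; omega
        · exact hea (h.inj _ _ _ _ (by omega) (h.pos _) ee).1
      have d2 : d ≠ c + 1 := by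
        rintro rfl
        rcases hc.only (h.adj e c (by omega)).symm (h.adj e (c+1) (by omega)) hb.symm
          (h.fne (by omega) (by omega) (by omega))
          (h.fne (by omega) (h.pos _) (by omega)) (h.fne (by omega) (h.pos _) (by omega)) g3.symm
          with ee | ee | ee
        · have := (h.inj _ _ _ _ (by omega) (by omega) ee).2; omega
        · have := (h.inj _ _ _ _ (by omega) (by omega) ee).2; omega
        · exact heb (h.inj _ _ _ _ (by omega) (h.pos _) ee).1
      have d3 : d ≠ c + 2 := by
        rintro rfl
        exfalso
        -- Hamiltonian cycle
        have hp := h.hp hab hea.symm heb.symm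
        have va := thp_a (s := s) (t := t) (f := f) (b := b) (c := e) (h.pos a)
        have vb := thp_b (s := s) (t := t) (f := f) (a := a) (c := e) (h.pos b)
        have vt := thp_t (s := s) (t := t) (f := f) (l := l) (a := a) (b := b) (c := e)
        have vc : ∀ i, i < l e → thp s t l f a b e (l a + l b + l e + 1 - i) = f e i :=
          fun i hi => thp_c hi
        rw [la, lb] at vc vt
        rw [la] at va vb
        rw [la, lb] at hp
        generalize thp s t l f a b e = q at *
        have c0 := vc 0 (by omega)
        have c1 := vc (c+1) (by omega)
        have c2 := vc (c+2) (by omega)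
        have q1 := hp.rot (d := l e - (c+2) + 3) (by omega) (by
          convert g3 using 1
          · rw [← c0]; congr 1
          · rw [← c2]; congr 1; omega)
        have q2 := q1.rot (d := 2) (by omega) (by
          rw [rot_gt (by omega), rot_le (by omega)]
          convert hb.symm using 1
          rw [← c1]; congr 1; omega)
        apply hf
        apply q2.full_of_cycle
        rw [rot_gt (by omega), rot_le (by omega), rot_le (by omega), rot_le (by omega)]
        have := h.adt a
        rw [la] at this
        convert this using 1
        rw [← vt]; congr 1; omega
      exact four (c-1) c (c+1) (d-1) r1 r2 r4 rd (by omega) (by omega) (by omega) (by omega)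
        (by omega) (by omega)
  · exact four (c-1) c (c2-1) c2 r1 r2 r3 r4 (by omega) (by omega) (by omega) (by omega)
        (by omega) (by omega)

/-- No end has an outside neighbour. -/
theorem Th.tau0 (h : Th G X s t l f) (hc : IsCub G) (hf : ¬ Full G X)
    (hno : ∀ k x, IsE l f k x → ¬ Out G X x) {o : V} (hoX : o ∈ X) (ho : Out G X o) :
    4 ≤ (Ig G X l f 0).card + (Ig G X l f 1).card + (Ig G X l f 2).card := by
  obtain ⟨k0, i0, hi0, hi1, hoo⟩ : ∃ k i, 0 < i ∧ i + 1 < l k ∧ o = f k i := by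
    rcases (h.mem o).1 hoX with rfl | rfl | ⟨k, i, hi, rfl⟩
    · exact absurd ho (h.s_notOut hc)
    · exact absurd ho (h.flip.s_notOut hc)
    · refine ⟨k, i, ?_, ?_, rfl⟩
      · by_contra h0
        have : i = 0 := by omega
        subst this
        exact hno k _ (Or.inl rfl) ho
      · by_contra h0
        have : i = l k - 1 := by omega
        subst this
        exact hno k _ (Or.inr rfl) ho
  have iS : ∀ k, IsE l f k (f k 0) := fun k => Or.inl rfl
  have iT : ∀ k, IsE l f k (f k (l k - 1)) := fun k => Or.inr rfl
  have B1 : ∀ k x, IsE l f k x → NotA G l f k x → 1 ≤ (Ig G X l f k).card ∧ 2 ≤ l k :=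
    fun k x hx hA => h.B1 hc hf hx (hno k x hx) hA
  by_cases hA : ∀ k x, IsE l f k x → NotA G l f k x
  · obtain ⟨a, b, h1, h2, h3⟩ : ∃ a b : Fin 3, a ≠ b ∧ a ≠ k0 ∧ b ≠ k0 := fin3_two k0
    rw [sum3 (fun k => (Ig G X l f k).card) h1 h2 h3]
    have b1 := (B1 a _ (iS a) (hA _ _ (iS a))).1
    have b2 := (B1 b _ (iS b) (hA _ _ (iS b))).1
    have b3 := h.B2 hc hf (k := k0) (by omega) (hno _ _ (iS _)) (hno _ _ (iT _)) (hA _ _ (iS _))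
      (hA _ _ (iT _))
    omega
  · unfold NotA at hA
    push Not at hA
    obtain ⟨a, x, hx, e, c, hea, hc0, hc1, hxa⟩ := hA
    obtain ⟨b, hab, heb⟩ := fin3_third hea.symm
    rw [sum3 (fun k => (Ig G X l f k).card) hea heb hab]
    have rx := h.recv hc hx hea hc0 hc1 hxa
    have n2 : 2 ≤ (Ig G X l f e).card := two_le_card rx.1 rx.2 (by omega)
    -- another receiving segment
    by_cases hother : ∀ k y k' d, IsE l f k y → k' ≠ k → 0 < d → d + 1 < l k' →
        G.Adj y (f k' d) → k' = e
    · have hAe : ∀ y, IsE l f e y → NotA G l f e y := by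
        intro y hy k' d h1 h2 h3 h4
        exact h1 (hother e y k' d hy h1 h2 h3 h4)
      have recE : ∀ k y, IsE l f k y → ¬ NotA G l f k y → e ≠ k ∧ ∃ d, 0 < d ∧ d + 1 < l e ∧
          G.Adj y (f e d) := by
        intro k y hy hn
        unfold NotA at hn
        push Not at hn
        obtain ⟨k', d, h1, h2, h3, h4⟩ := hn
        have := hother k y k' d hy h1 h2 h3 h4
        subst this
        exact ⟨h1, d, h2, h3, h4⟩
      by_cases hall : ∀ k y, k ≠ e → IsE l f k y → ¬ NotA G l f k y
      · obtain ⟨-, ca, ca0, ca1, caa⟩ := recE a _ (iS a) (hall a _ hea.symm (iS a))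
        obtain ⟨-, cb, cb0, cb1, cba⟩ := recE b _ (iS b) (hall b _ heb.symm (iS b))
        have nab : f a 0 ≠ f b 0 := h.fne (h.pos _) (h.pos _) (by omega)
        have cab := h.recv_ne hc (iS a) (iS b) hea heb nab ca0 ca1 caa cba
        have rca := h.recv hc (iS a) hea ca0 ca1 caa
        have rcb := h.recv hc (iS b) heb cb0 cb1 cba
        have three : ∀ k, k ≠ e → 2 ≤ l k → 4 ≤ (Ig G X l f e).card := by
          intro k hk hl
          obtain ⟨-, cc, cc0, cc1, cca⟩ := recE k _ (iT k) (hall k _ hk (iT k))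
          have rcc := h.recv hc (iT k) hk.symm cc0 cc1 cca
          have na : f a 0 ≠ f k (l k - 1) := h.fne (h.pos _) (by omega) (by omega)
          have nb : f b 0 ≠ f k (l k - 1) := h.fne (h.pos _) (by omega) (by omega)
          have d1 := h.recv_ne hc (iS a) (iT k) hea hk.symm na ca0 ca1 caa cca
          have d2 := h.recv_ne hc (iS b) (iT k) heb hk.symm nb cb0 cb1 cba cca
          have := recv_card (T := Ig G X l f e) (C := {ca, cb, cc}) (by simp) (by
            intro z hz
            simp only [Finset.mem_insert, Finset.mem_singleton] at hz
            rcases hz with rfl | rfl | rfl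
            · exact ⟨ca0, rca⟩
            · exact ⟨cb0, rcb⟩
            · exact ⟨cc0, rcc⟩)
          rw [Finset.card_insert_of_notMem (by simp [cab, d1]), Finset.card_pair d2] at this
          omega
        by_cases la : 2 ≤ l a
        · have := three a hea.symm la
          omega
        by_cases lb : 2 ≤ l b
        · have := three b heb.symm lb
          omega
        have pa := h.pos a
        have pb := h.pos b
        have h1 : l a = 1 := by omega
        have h2 : l b = 1 := by omega
        rcases Nat.lt_or_ge ca cb with hlt | hge
        · have := h.special hc hf hea heb hab h1 h2 (hno _ _ (iS e)) (hAe _ (iS e)) ca0 cb1 hlt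
            caa cba
          omega
        · have := h.special hc hf heb hea hab.symm h2 h1 (hno _ _ (iS e)) (hAe _ (iS e)) cb0 ca1
            (by omega) cba caa
          omega
      · push Not at hall
        obtain ⟨k1, y, hk1, hy, hyA⟩ := hall
        have by1 := (B1 k1 y hy hyA).1
        by_cases huniq : ∀ k x2, IsE l f k x2 → ¬ NotA G l f k x2 → x2 = x
        · have bA : ∀ y, IsE l f b y → NotA G l f b y := by
            intro y hy
            by_contra hn
            have := huniq b y hy hn
            subst this
            obtain ⟨i, hi, e1⟩ := h.ise hx
            obtain ⟨i', hi', e2⟩ := h.ise hy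
            exact hab (h.inj _ _ _ _ hi hi' (e1.symm.trans e2)).1
          obtain ⟨bb1, lb⟩ := B1 b _ (iS b) (bA _ (iS b))
          by_cases lb3 : 3 ≤ l b
          · have := h.B2 hc hf lb3 (hno _ _ (iS _)) (hno _ _ (iT _)) (bA _ (iS _)) (bA _ (iT _))
            omega
          have pa := h.pos a
          by_cases la : 2 ≤ l a
          · have nst : f a 0 ≠ f a (l a - 1) := h.fne (h.pos _) (by omega) (by omega)
            have : 1 ≤ (Ig G X l f a).card := by
              by_cases hA1 : NotA G l f a (f a 0)
              · exact (B1 a _ (iS a) hA1).1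
              · by_cases hA2 : NotA G l f a (f a (l a - 1))
                · exact (B1 a _ (iT a) hA2).1
                · exact absurd ((huniq a _ (iS a) hA1).trans (huniq a _ (iT a) hA2).symm) nst
            omega
          · -- l a = 1, l b = 2
            have g0 : 0 ∈ Ig G X l f e := by
              rcases h.triS hc hf b (hno _ _ (iS b)) with
                ⟨k', d, g1, g2, g3, g4⟩ | ⟨k', g1, g2, g3, g4⟩ | ⟨d, g1, g2, g3⟩
              · exact absurd g4 (bA _ (iS b) k' d g1 g2 g3)
              · rcases fin3_cases hea heb hab k' with rfl | rfl | rfl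
                · exact h.bS heb.symm g3 g4.symm
                · omega
                · exact absurd rfl g1
              · omega
            have g9 : l e - 2 ∈ Ig G X l f e := by
              rcases h.triT hc hf b (hno _ _ (iT b)) with
                ⟨k', d, g1, g2, g3, g4⟩ | ⟨k', g1, g2, g3, g4⟩ | ⟨d, g1, g2⟩
              · exact absurd g4 (bA _ (iT b) k' d g1 g2 g3)
              · rcases fin3_cases hea heb hab k' with rfl | rfl | rfl
                · exact h.bT heb.symm g3 g4.symm
                · omega
                · exact absurd rfl g1
              · omega
            have hk0 : k0 = e := by
              rcases fin3_cases hea heb hab k0 with rfl | rfl | rfl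
              · rfl
              · omega
              · omega
            subst hk0
            have hic : i0 ≠ c := by
              rintro rfl
              subst hoo
              obtain ⟨i, hi, rfl⟩ := h.ise hx
              have ee : i0 - 1 + 1 = i0 := by omega
              have a1 := (h.adj k0 (i0-1) (by omega)).symm
              rw [ee] at a1
              exact hc.notOut a1 (h.adj k0 i0 hi1) hxa.symm
                (h.fne (by omega) (by omega) (by omega)) (h.fne (by omega) hi (by omega))
                (h.fne (by omega) hi (by omega)) (h.memS (by omega)) (h.memS (by omega))
                (h.memS hi) ho
            have h3 : 3 ≤ (Ig G X l f k0).card := by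
              apply Finset.two_lt_card.2
              by_cases hcc : c = 1
              · exact ⟨0, g0, c, rx.2, l k0 - 2, g9, by omega, by omega, by omega⟩
              · exact ⟨0, g0, c-1, rx.1, c, rx.2, by omega, by omega, by omega⟩
            omega
        · push Not at huniq
          obtain ⟨k2, x2, hx2, hx2A, hne⟩ := huniq
          obtain ⟨hk2, d, d0, d1, d2⟩ := recE k2 x2 hx2 hx2A
          have dd := h.recv_ne hc hx hx2 hea hk2 hne.symm hc0 hc1 hxa d2
          have rd := h.recv hc hx2 hk2 d0 d1 d2
          have h3 := recv_card (T := Ig G X l f e) (C := {c, d}) (by simp) (by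
            intro z hz
            simp only [Finset.mem_insert, Finset.mem_singleton] at hz
            rcases hz with rfl | rfl
            · exact ⟨hc0, rx⟩
            · exact ⟨d0, rd⟩)
          rw [Finset.card_pair dd] at h3
          rcases fin3_cases hea heb hab k1 with rfl | rfl | rfl
          · exact absurd rfl hk1
          · omega
          · omega
    · push Not at hother
      obtain ⟨k, y, k', d, h1, h2, h3, h4, h5, h6⟩ := hother
      have ry := h.recv hc h1 h2 h3 h4 h5
      have := two_le_card ry.1 ry.2 (by omega)
      rcases fin3_cases hea heb hab k' with rfl | rfl | rfl
      · exact absurd rfl h6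
      · omega
      · omega

theorem Th.main (h : Th G X s t l f) (hc : IsCub G) (hf : ¬ Full G X)
    {o : V} (hoX : o ∈ X) (ho : Out G X o) :
    ∃ S : Finset V, (∀ w ∈ S, En G X w ∧ Out G X w) ∧
    4 ≤ (Ig G X l f 0).card + (Ig G X l f 1).card + (Ig G X l f 2).card +
      (if S.Nonempty then S.card + 1 else 0) := by
  by_cases hno : ∀ k x, IsE l f k x → ¬ Out G X x
  · exact ⟨∅, by simp, by simpa using h.tau0 hc hf hno hoX ho⟩
  · push Not at hno
    obtain ⟨e, x, hx, hxo⟩ := hno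
    obtain ⟨a, b, hab, hae, hbe⟩ : ∃ a b : Fin 3, a ≠ b ∧ a ≠ e ∧ b ≠ e := fin3_two e
    rw [sum3 (fun k => (Ig G X l f k).card) hab hae hbe]
    obtain ⟨i, hi, hxi⟩ := h.ise hx
    have xa : x ≠ f a 0 := by rw [hxi]; exact h.fne hi (h.pos _) (by omega)
    have xb : x ≠ f b 0 := by rw [hxi]; exact h.fne hi (h.pos _) (by omega)
    have nab : f a 0 ≠ f b 0 := h.fne (h.pos _) (h.pos _) (by omega)
    have hxE := h.isEn hx
    -- contributions
    have con : ∀ k, ¬ Out G X (f k 0) → (1 ≤ (Ig G X l f k).card) ∨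
        2 ≤ (Ig G X l f a).card + (Ig G X l f b).card + (Ig G X l f e).card := by
      intro k hk
      rcases h.triS hc hf k hk with
        ⟨k', d, g1, g2, g3, g4⟩ | ⟨k', g1, g2, g3, g4⟩ | ⟨d, g1, g2, g3⟩
      · right
        have r := h.recvS hc g1 g2 g3 g4
        have := two_le_card r.1 r.2 (by omega)
        rcases fin3_cases hab hae hbe k' with rfl | rfl | rfl <;> omega
      · left
        exact Finset.card_pos.2 ⟨_, h.bS g1 g2 g4⟩
      · left
        exact Finset.card_pos.2 ⟨_, h.cS hc g1 g2 g3⟩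
    by_cases oa : Out G X (f a 0)
    · by_cases ob : Out G X (f b 0)
      · refine ⟨{x, f a 0, f b 0}, ?_, ?_⟩
        · intro w hw
          simp only [Finset.mem_insert, Finset.mem_singleton] at hw
          rcases hw with rfl | rfl | rfl
          · exact ⟨hxE, hxo⟩
          · exact ⟨h.enS _, oa⟩
          · exact ⟨h.enS _, ob⟩
        · rw [if_pos (by simp), Finset.card_insert_of_notMem (by simp [xa, xb]),
            Finset.card_pair nab]
          omega
      · refine ⟨{x, f a 0}, ?_, ?_⟩
        · intro w hw
          simp only [Finset.mem_insert, Finset.mem_singleton] at hw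
          rcases hw with rfl | rfl
          · exact ⟨hxE, hxo⟩
          · exact ⟨h.enS _, oa⟩
        · rw [if_pos (by simp), Finset.card_pair xa]
          rcases con b ob with h | h <;> omega
    · by_cases ob : Out G X (f b 0)
      · refine ⟨{x, f b 0}, ?_, ?_⟩
        · intro w hw
          simp only [Finset.mem_insert, Finset.mem_singleton] at hw
          rcases hw with rfl | rfl
          · exact ⟨hxE, hxo⟩
          · exact ⟨h.enS _, ob⟩
        · rw [if_pos (by simp), Finset.card_pair xb]
          rcases con a oa with h | h <;> omega
      · refine ⟨{x}, ?_, ?_⟩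
        · intro w hw
          simp only [Finset.mem_singleton] at hw
          subst hw
          exact ⟨hxE, hxo⟩
        · rw [if_pos (by simp), Finset.card_singleton]
          rcases con a oa with h | h <;> rcases con b ob with h' | h' <;> omega

end

section

variable {V : Type*} [DecidableEq V]
variable {G : SimpleGraph V} {X Y : Finset V} {m : ℕ} {p : ℕ → V}
variable {q : ℕ → V} {j : ℕ}
def CrossC (G : SimpleGraph V) (X : Finset V) (m : ℕ) (p : ℕ → V) : Prop :=
  ∃ (S : Finset V) (T : Finset ℕ), (∀ w ∈ S, En G X w ∧ Out G X w) ∧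
    (∀ i ∈ T, i + 1 < m ∧ Gd G X p i) ∧
    8 ≤ T.card + (if S.Nonempty then S.card + 1 else 0)

def thl (m i j : ℕ) : Fin 3 → ℕ := ![j, i - j - 1, m - 1 - i]

def thf (p : ℕ → V) (m j : ℕ) : Fin 3 → ℕ → V :=
  ![fun h => p (j - 1 - h), fun h => p (j + 1 + h), fun h => p (m - 1 - h)]

theorem cross_th (h : HP G X m p) {i : ℕ} (hj : 1 ≤ j) (hij : j + 2 ≤ i) (him : i + 1 < m)
    (h0 : G.Adj (p 0) (p i)) (h1 : G.Adj (p (m-1)) (p j)) :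
    Th G X (p j) (p i) (thl m i j) (thf p m j) where
  pos := by
    intro k
    fin_cases k <;> simp [thl] <;> omega
  inj := by
    intro k a k' a' ha ha' e
    fin_cases k <;> fin_cases k' <;> simp [thl, thf] at ha ha' e ⊢ <;>
      (have := h.inj _ _ (by omega) (by omega) e; omega)
  adj := by
    intro k a ha
    fin_cases k <;> simp [thl, thf] at ha ⊢
    · exact (h.adj' (by omega) (by omega)).symm
    · exact h.adj' (by omega) (by omega)
    · exact (h.adj' (by omega) (by omega)).symm
  ads := by
    intro k
    fin_cases k <;> simp [thf]
    · exact (h.adj' (by omega) (by omega)).symm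
    · exact h.adj' (by omega) (by omega)
    · exact h1.symm
  adt := by
    intro k
    fin_cases k <;> simp [thl, thf]
    · exact h0.symm
    · exact (h.adj' (by omega) (by omega)).symm
    · exact h.adj' (by omega) (by omega)
  st := h.ne (by omega) (by omega) (by omega)
  ns := by
    intro k a ha
    fin_cases k <;> simp [thl, thf] at ha ⊢ <;> exact h.ne (by omega) (by omega) (by omega)
  nt := by
    intro k a ha
    fin_cases k <;> simp [thl, thf] at ha ⊢ <;> exact h.ne (by omega) (by omega) (by omega)
  mem := by
    intro v
    rw [h.mem]
    constructor
    · rintro ⟨a, ha, rfl⟩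
      rcases Nat.lt_trichotomy a j with hlt | rfl | hgt
      · exact Or.inr (Or.inr ⟨0, j - 1 - a, by simp [thl]; omega, by
          simp [thf]; congr 1; omega⟩)
      · exact Or.inl rfl
      · rcases Nat.lt_trichotomy a i with hlt | rfl | hgt
        · exact Or.inr (Or.inr ⟨1, a - j - 1, by simp [thl]; omega, by
            simp [thf]; congr 1; omega⟩)
        · exact Or.inr (Or.inl rfl)
        · exact Or.inr (Or.inr ⟨2, m - 1 - a, by simp [thl]; omega, by
            simp [thf]; congr 1; omega⟩)
    · rintro (rfl | rfl | ⟨k, a, ha, rfl⟩)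
      · exact ⟨j, by omega, rfl⟩
      · exact ⟨i, by omega, rfl⟩
      · fin_cases k <;> simp [thl, thf] at ha ⊢ <;> exact ⟨_, by omega, rfl⟩

theorem cross (hc : IsCub G) (h : HP G X m p) {i : ℕ} (hj : 1 ≤ j) (hij : j + 2 ≤ i)
    (him : i + 1 < m)
    (h0 : G.Adj (p 0) (p i)) (h1 : G.Adj (p (m-1)) (p j)) (hf : ¬ Full G X)
    {o : V} (hoX : o ∈ X) (ho : Out G X o) : CrossC G X m p := by
  have ht := cross_th h hj hij him h0 h1
  obtain ⟨S, hS, hcard⟩ := ht.main hc hf hoX ho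
  have s1 : Nn G X (p j) := Or.inr (ht.s_notOut hc)
  have s2 : Nn G X (p i) := Or.inr (ht.flip.s_notOut hc)
  have e1 : Nn G X (p (j-1)) := Or.inl (ht.enS 0)
  have e2 : Nn G X (p (j+1)) := Or.inl (ht.enS 1)
  have e3 : Nn G X (p (i-1)) := by
    have := ht.enT 1
    simp [thl, thf] at this
    left
    convert this using 2; omega
  have e4 : Nn G X (p (i+1)) := by
    have := ht.enT 2
    simp [thl, thf] at this
    left
    convert this using 2; omega
  refine ⟨S, ((({j-1, j, i-1, i} : Finset ℕ) ∪
    (Ig G X (thl m i j) (thf p m j) 0).image (fun a => j - 2 - a)) ∪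
    (Ig G X (thl m i j) (thf p m j) 1).image (fun a => j + 1 + a)) ∪
    (Ig G X (thl m i j) (thf p m j) 2).image (fun a => m - 2 - a), hS, ?_, ?_⟩
  · intro a ha
    simp only [Finset.mem_union, Finset.mem_insert, Finset.mem_singleton, Finset.mem_image,
      mem_Ig] at ha
    rcases ha with (((rfl | rfl | rfl | rfl) | ⟨b, ⟨b1, b2, b3⟩, rfl⟩) | ⟨b, ⟨b1, b2, b3⟩, rfl⟩) |
      ⟨b, ⟨b1, b2, b3⟩, rfl⟩
    · refine ⟨by omega, e1, ?_⟩
      convert s1 using 2; omega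
    · exact ⟨by omega, s1, e2⟩
    · refine ⟨by omega, e3, ?_⟩
      convert s2 using 2; omega
    · exact ⟨by omega, s2, e4⟩
    · simp [thl, thf] at b1 b2 b3
      refine ⟨by omega, ?_, ?_⟩
      · convert b3 using 2; omega
      · convert b2 using 2; omega
    · simp [thl, thf] at b1 b2 b3
      exact ⟨by omega, b2, b3⟩
    · simp [thl, thf] at b1 b2 b3
      refine ⟨by omega, ?_, ?_⟩
      · convert b3 using 2; omega
      · convert b2 using 2; omega
  · rw [Finset.card_union_of_disjoint, Finset.card_union_of_disjoint,
      Finset.card_union_of_disjoint, card4 (by omega) (by omega) (by omega) (by omega) (by omega)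
      (by omega), Finset.card_image_of_injOn, Finset.card_image_of_injOn,
      Finset.card_image_of_injOn]
    · omega
    · intro a ha b hb e
      simp only [Finset.mem_coe, mem_Ig] at ha hb
      have := ha.1
      have := hb.1
      simp [thl] at *
      omega
    · intro a ha b hb e
      simp at e
      exact e
    · intro a ha b hb e
      simp only [Finset.mem_coe, mem_Ig] at ha hb
      have := ha.1
      have := hb.1
      simp [thl] at *
      omega
    · rw [Finset.disjoint_left]
      intro a ha hb
      simp only [Finset.mem_union, Finset.mem_insert, Finset.mem_singleton, Finset.mem_image,
        mem_Ig] at ha hb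
      obtain ⟨b, ⟨hb, -, -⟩, rfl⟩ := hb
      simp [thl] at hb
      omega
    · rw [Finset.disjoint_left]
      intro a ha hb
      simp only [Finset.mem_union, Finset.mem_insert, Finset.mem_singleton, Finset.mem_image,
        mem_Ig] at ha hb
      obtain ⟨b, ⟨hb, -, -⟩, rfl⟩ := hb
      simp [thl] at hb
      rcases ha with ha | ⟨a, ⟨ha, -, -⟩, he⟩
      · omega
      · simp [thl] at ha
        omega
    · rw [Finset.disjoint_left]
      intro a ha hb
      simp only [Finset.mem_union, Finset.mem_insert, Finset.mem_singleton, Finset.mem_image,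
        mem_Ig] at ha hb
      obtain ⟨b, ⟨hb, -, -⟩, rfl⟩ := hb
      simp [thl] at hb
      rcases ha with (ha | ⟨a, ⟨ha, -, -⟩, he⟩) | ⟨a, ⟨ha, -, -⟩, he⟩
      · omega
      · simp [thl] at ha
        omega
      · simp [thl] at ha
        omega

end

section

variable {V : Type*} [DecidableEq V]
variable {G : SimpleGraph V} {X Y : Finset V} {m : ℕ} {p : ℕ → V}
variable {q : ℕ → V} {j : ℕ}
def Chordless (G : SimpleGraph V) (m : ℕ) (p : ℕ → V) : Prop :=
  ∀ h, h < m → G.Adj (p (m-1)) (p h) → h = m - 2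

def RightC (G : SimpleGraph V) (X : Finset V) (m : ℕ) (p : ℕ → V) (j : ℕ) : Prop :=
  (j = m - 2 ∧ Chordless G m p) ∨ LobeC G X m p j

def StructC (G : SimpleGraph V) (X : Finset V) (m : ℕ) (p p' : ℕ → V) : Prop :=
  HP G X m p ∧ HP G X m p' ∧ (∀ i, i < m → p' i = p (m - 1 - i)) ∧
    (CrossC G X m p ∨ ∃ j j', j + 1 < m ∧ j' + 1 < m ∧ m - 1 ≤ j + j' ∧ RightC G X m p j ∧
      RightC G X m p' j')

theorem er_combine (h : HP G X m p) {p' : ℕ → V} (hpp : ∀ i, i < m → p' i = p (m - 1 - i))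
    {j j' : ℕ} (hj : j + 1 < m) (hjj : m - 1 ≤ j + j') {u w : V}
    (hw : ER G X m p j w) (hu : ER G X m p' j' u) : En2 G X u w := by
  obtain ⟨q, ⟨hq, hqa⟩, rfl⟩ := hw
  obtain ⟨q', ⟨hq', hqa'⟩, rfl⟩ := hu
  have hb : ∀ b, b ≤ j' → b < m → q' b = p (m - 1 - b) := fun b h1 h2 => by
    rw [hqa' b h1, hpp b h2]
  refine ⟨m, fun h => if h ≤ j then q' (m - 1 - h) else q h, ⟨h.pos, ?_, ?_, ?_⟩, by simp, ?_⟩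
  · have key : ∀ a b, a ≤ j → j < b → b < m → q' (m - 1 - a) ≠ q b := by
      intro a b ha hb' hbm e
      obtain ⟨c, hc, ec⟩ := (h.mem (q b)).1 (hq.memX hbm)
      by_cases hcj : c ≤ j
      · rw [← hqa c hcj] at ec
        have := hq.inj _ _ hc hbm ec
        omega
      · have h1 := hb (m - 1 - c) (by omega) (by omega)
        have h2 : m - 1 - (m - 1 - c) = c := by omega
        rw [h2, ec, ← e] at h1
        have := hq'.inj _ _ (by omega) (by omega) h1
        omega
    intro a b ha hb e
    split_ifs at e with h1 h2 h2
    · have := hq'.inj _ _ (by omega) (by omega) e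
      omega
    · exact absurd e (key _ _ h1 (by omega) hb)
    · exact absurd e.symm (key _ _ h2 (by omega) ha)
    · exact hq.inj _ _ ha hb e
  · intro a ha
    split_ifs with h1 h2 h2
    · exact (hq'.adj' (by omega) (by omega)).symm
    · have : a = j := by omega
      subst this
      have h3 := hb (m - 1 - a) (by omega) (by omega)
      have h4 : m - 1 - (m - 1 - a) = a := by omega
      rw [h4, ← hqa a (le_refl _)] at h3
      rw [h3]
      exact hq.adj a ha
    · omega
    · exact hq.adj a ha
  · intro v
    constructor
    · intro hv
      obtain ⟨a, ha, rfl⟩ := (h.mem v).1 hv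
      by_cases haj : a ≤ j
      · obtain ⟨b, hb', e⟩ := (hq'.mem _).1 hv
        by_cases hbj : m - 1 - j ≤ b
        · refine ⟨m - 1 - b, by omega, ?_⟩
          rw [if_pos (by omega), ← e]
          congr 1; omega
        · rw [hb b (by omega) hb'] at e
          have := h.inj _ _ (by omega) ha e
          omega
      · obtain ⟨b, hb', e⟩ := (hq.mem _).1 hv
        by_cases hbj : b ≤ j
        · rw [hqa b hbj] at e
          have := h.inj _ _ hb' ha e
          omega
        · refine ⟨b, hb', ?_⟩
          rw [if_neg hbj, e]
    · rintro ⟨a, ha, rfl⟩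
      split_ifs
      · exact hq'.memX (by omega)
      · exact hq.memX ha
  · show (if m - 1 ≤ j then q' (m - 1 - (m-1)) else q (m-1)) = q (m-1)
    rw [if_neg (by omega)]

theorem nonfull_three (h : HP G X m p) (hf : ¬ Full G X) : 3 ≤ m := by
  by_contra hm
  apply hf
  intro v hv
  obtain ⟨i, hi, rfl⟩ := (h.mem v).1 hv
  have : i = 0 ∨ i = m - 1 := by omega
  rcases this with rfl | rfl
  · exact h.en0
  · exact h.en

theorem struct (hc : IsCub G) {p0 : ℕ → V} (hp0 : HP G X m p0) (hf : ¬ Full G X)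
    {o : V} (hoX : o ∈ X) (ho : Out G X o) : ∃ p p', StructC G X m p p' := by
  classical
  have hm := nonfull_three hp0 hf
  by_cases hcl : ∃ j q, HP G X m q ∧ j + 2 < m ∧ G.Adj (q (m-1)) (q j)
  · -- minimal chord
    obtain ⟨j, ⟨p, hp, hj, ha⟩, hjmin⟩ : ∃ j, (∃ q, HP G X m q ∧ j + 2 < m ∧
        G.Adj (q (m-1)) (q j)) ∧ ∀ h, h < j → ¬ ∃ q, HP G X m q ∧ h + 2 < m ∧
        G.Adj (q (m-1)) (q h) :=
      ⟨Nat.find hcl, Nat.find_spec hcl, fun h hh => Nat.find_min hcl hh⟩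
    have hmin : ∀ q h, HP G X m q → h < j → ¬ G.Adj (q (m-1)) (q h) := by
      intro q h hq hh hadj
      exact hjmin h hh ⟨q, hq, by omega, hadj⟩
    have hj1 : 1 ≤ j := by
      by_contra h0
      have : j = 0 := by omega
      subst this
      exact hf (hp.full_of_cycle ha)
    have mklobe : ∀ q, HP G X m q → G.Adj (q (m-1)) (q j) → LobeC G X m q j := by
      intro q hq hqa
      refine lobe hc hq hj1 hj hqa ?_
      intro r hr i hi
      rw [← hr.2 i (by omega)]
      exact hmin r i hr.1 hi
    have hp' := hp.rev
    have agree : ∀ q', RP G X m (fun i => p (m - 1 - i)) (m - 1 - j) q' → ∀ i, j ≤ i → i < m →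
        q' (m - 1 - i) = p i := by
      intro q' hq' i h1 h2
      rw [hq'.2 _ (by omega)]
      show p (m - 1 - (m - 1 - i)) = p i
      congr 1; omega
    by_cases hcr : ∃ q' i', RP G X m (fun i => p (m - 1 - i)) (m - 1 - j) q' ∧ i' < m - 1 - j ∧
        G.Adj (q' (m-1)) (q' i')
    · obtain ⟨q', i', hq', hi', hadj⟩ := hcr
      have hq := hq'.1.rev
      have hag := agree q' hq'
      have qa : G.Adj ((fun i => q' (m - 1 - i)) (m-1)) ((fun i => q' (m - 1 - i)) j) := by
        show G.Adj (q' (m - 1 - (m - 1))) (q' (m - 1 - j))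
        rw [hag j (le_refl _) (by omega), hag (m-1) (by omega) (by omega)]
        exact ha
      have q0 : G.Adj ((fun i => q' (m - 1 - i)) 0) ((fun i => q' (m - 1 - i)) (m - 1 - i')) := by
        simp only [Nat.sub_zero]
        convert hadj using 2; omega
      refine ⟨_, q', hq, hq'.1, ?_, Or.inl ?_⟩
      · intro i hi
        show q' i = q' (m - 1 - (m - 1 - i))
        congr 1; omega
      generalize (fun i => q' (m - 1 - i)) = q at *
      refine cross hc hq hj1 (i := m - 1 - i') ?_ ?_ q0 qa hf hoX ho
      · by_contra hlt
        have e : m - 1 - i' = j + 1 := by omega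
        rw [e] at q0
        apply hf
        apply (hq.rot (d := j) (by omega) qa).full_of_cycle
        rw [rot_gt (by omega), rot_le (by omega)]
        convert q0.symm using 2; omega
      · by_contra hlt
        have e : m - 1 - i' = m - 1 := by omega
        rw [e] at q0
        exact hf (hq.full_of_cycle q0.symm)
    · push Not at hcr
      by_cases hch : ∃ i' q', RP G X m (fun i => p (m - 1 - i)) (m - 1 - j) q' ∧ i' + 2 < m ∧
          G.Adj (q' (m-1)) (q' i')
      · obtain ⟨i', ⟨q', hq', hi', hadj⟩, himin⟩ : ∃ i',
            (∃ q', RP G X m (fun i => p (m - 1 - i)) (m - 1 - j) q' ∧ i' + 2 < m ∧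
              G.Adj (q' (m-1)) (q' i')) ∧ ∀ h, h < i' →
            ¬ ∃ q', RP G X m (fun i => p (m - 1 - i)) (m - 1 - j) q' ∧ h + 2 < m ∧
              G.Adj (q' (m-1)) (q' h) :=
          ⟨Nat.find hch, Nat.find_spec hch, fun h hh => Nat.find_min hch hh⟩
        have hmin' : ∀ q h, RP G X m (fun i => p (m - 1 - i)) (m - 1 - j) q → h < i' →
            ¬ G.Adj (q (m-1)) (q h) := by
          intro q h hq hh hadj
          exact himin h hh ⟨q, hq, by omega, hadj⟩
        have hq := hq'.1.rev
        have hag := agree q' hq'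
        have qa : G.Adj ((fun i => q' (m - 1 - i)) (m-1)) ((fun i => q' (m - 1 - i)) j) := by
          show G.Adj (q' (m - 1 - (m - 1))) (q' (m - 1 - j))
          rw [hag j (le_refl _) (by omega), hag (m-1) (by omega) (by omega)]
          exact ha
        have g1 : ¬ i' < m - 1 - j := fun hlt => hcr q' i' hq' hlt hadj
        have g2 : i' ≠ m - 1 - j := by
          intro e
          have := hq.chord_only hc hj1 hj qa (e := 0) (by omega) (by
            simp only [Nat.sub_zero]
            rw [← e]
            exact hadj.symm)
          omega
        refine ⟨_, q', hq, hq'.1, ?_, Or.inr ⟨j, i', by omega, by omega, by omega,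
          Or.inr (mklobe _ hq qa), Or.inr ?_⟩⟩
        · intro i hi
          show q' i = q' (m - 1 - (m - 1 - i))
          congr 1; omega
        · refine lobe hc hq'.1 (by omega) hi' hadj ?_
          intro r hr i hi
          rw [← hr.2 i (by omega)]
          exact hmin' r i ⟨hr.1, fun a ha => by rw [hr.2 a (by omega), hq'.2 a ha]⟩ hi
      · push Not at hch
        refine ⟨p, _, hp, hp', fun _ _ => rfl, Or.inr ⟨j, m - 2, by omega, by omega, by omega,
          Or.inr (mklobe p hp ha), Or.inl ⟨rfl, ?_⟩⟩⟩
        intro h h1 h2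
        by_contra hne
        have : h ≠ m - 1 := by
          rintro rfl
          exact G.loopless.irrefl _ h2
        exact hch h _ hp'.rp (by omega) h2
  · push Not at hcl
    have hC : ∀ q, HP G X m q → Chordless G m q := by
      intro q hq h h1 h2
      by_contra hne
      have : h ≠ m - 1 := by
        rintro rfl
        exact G.loopless.irrefl _ h2
      exact hcl h q hq (by omega) h2
    exact ⟨p0, _, hp0, hp0.rev, fun _ _ => rfl, Or.inr ⟨m - 2, m - 2, by omega, by omega, by omega,
      Or.inl ⟨rfl, hC _ hp0⟩, Or.inl ⟨rfl, hC _ hp0.rev⟩⟩⟩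

end

section

variable {V : Type*} [DecidableEq V]
variable {G : SimpleGraph V} {X Y : Finset V} {m : ℕ} {p : ℕ → V}
variable {q : ℕ → V} {j : ℕ}
/-- A partition of the vertex set into traceable parts. -/
structure Cov (G : SimpleGraph V) (C : Finset (Finset V)) : Prop where
  tr : ∀ X ∈ C, Tr G X
  dj : ∀ X ∈ C, ∀ Y ∈ C, X ≠ Y → Disjoint X Y
  cov : ∀ v, ∃ X ∈ C, v ∈ X

def MinC (G : SimpleGraph V) (C : Finset (Finset V)) : Prop :=
  Cov G C ∧ ∀ C', Cov G C' → C.card ≤ C'.card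

theorem Cov.eq {C : Finset (Finset V)} (h : Cov G C) (hX : X ∈ C) (hY : Y ∈ C) {v : V}
    (h1 : v ∈ X) (h2 : v ∈ Y) : X = Y := by
  by_contra hne
  exact Finset.disjoint_left.1 (h.dj X hX Y hY hne) h1 h2

theorem Cov.replace {C A B : Finset (Finset V)} (h : Cov G C) (hA : A ⊆ C)
    (htr : ∀ X ∈ B, Tr G X) (hdj : ∀ X ∈ B, ∀ Y ∈ B, X ≠ Y → Disjoint X Y)
    (hu : ∀ v, (∃ X ∈ A, v ∈ X) ↔ ∃ X ∈ B, v ∈ X) : Cov G ((C \ A) ∪ B) := by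
  have key : ∀ X ∈ C \ A, ∀ Y ∈ B, Disjoint X Y := by
    intro X hX Y hY
    rw [Finset.mem_sdiff] at hX
    rw [Finset.disjoint_left]
    intro v hv hv'
    obtain ⟨Z, hZ, hvZ⟩ := (hu v).2 ⟨Y, hY, hv'⟩
    have := h.eq hX.1 (hA hZ) hv hvZ
    subst this
    exact hX.2 hZ
  refine ⟨?_, ?_, ?_⟩
  · intro X hX
    rcases Finset.mem_union.1 hX with hX | hX
    · exact h.tr X (Finset.mem_sdiff.1 hX).1
    · exact htr X hX
  · intro X hX Y hY hne
    rcases Finset.mem_union.1 hX with hX | hX <;> rcases Finset.mem_union.1 hY with hY | hY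
    · exact h.dj X (Finset.mem_sdiff.1 hX).1 Y (Finset.mem_sdiff.1 hY).1 hne
    · exact key X hX Y hY
    · exact (key Y hY X hX).symm
    · exact hdj X hX Y hY hne
  · intro v
    obtain ⟨X, hX, hv⟩ := h.cov v
    by_cases hXA : X ∈ A
    · obtain ⟨Y, hY, hvY⟩ := (hu v).1 ⟨X, hXA, hv⟩
      exact ⟨Y, Finset.mem_union_right _ hY, hvY⟩
    · exact ⟨X, Finset.mem_union_left _ (Finset.mem_sdiff.2 ⟨hX, hXA⟩), hv⟩

theorem MinC.replace_card {C A B : Finset (Finset V)} (h : MinC G C) (hA : A ⊆ C)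
    (htr : ∀ X ∈ B, Tr G X) (hdj : ∀ X ∈ B, ∀ Y ∈ B, X ≠ Y → Disjoint X Y)
    (hu : ∀ v, (∃ X ∈ A, v ∈ X) ↔ ∃ X ∈ B, v ∈ X) : A.card ≤ B.card := by
  have h1 := h.2 _ (h.1.replace hA htr hdj hu)
  have h2 := Finset.card_union_le (C \ A) B
  have h3 := Finset.card_sdiff_of_subset hA
  have h4 := Finset.card_le_card hA
  omega

theorem MinC.merge2 {C : Finset (Finset V)} (h : MinC G C) (hX : X ∈ C) (hY : Y ∈ C)
    (hne : X ≠ Y) (ht : Tr G (X ∪ Y)) : False := by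
  have := h.replace_card (A := {X, Y}) (B := {X ∪ Y}) ?_ ?_ ?_ ?_
  · rw [Finset.card_pair hne, Finset.card_singleton] at this
    omega
  · intro Z hZ
    simp only [Finset.mem_insert, Finset.mem_singleton] at hZ
    rcases hZ with rfl | rfl <;> assumption
  · intro Z hZ
    rw [Finset.mem_singleton] at hZ
    rw [hZ]; exact ht
  · intro Z hZ W hW hne
    rw [Finset.mem_singleton] at hZ hW
    exact absurd (hZ.trans hW.symm) hne
  · intro v
    simp

theorem MinC.merge3 {C : Finset (Finset V)} (h : MinC G C) {Z U W : Finset V} (hX : X ∈ C)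
    (hY : Y ∈ C) (hZ : Z ∈ C) (h1 : X ≠ Y) (h2 : X ≠ Z) (h3 : Y ≠ Z) (hU : Tr G U) (hW : Tr G W)
    (hd : Disjoint U W) (hu : U ∪ W = X ∪ Y ∪ Z) : False := by
  have := h.replace_card (A := {X, Y, Z}) (B := {U, W}) ?_ ?_ ?_ ?_
  · rw [Finset.card_eq_three.2 ⟨X, Y, Z, h1, h2, h3, rfl⟩] at this
    have := Finset.card_le_two (a := U) (b := W)
    omega
  · intro Z hZ
    simp only [Finset.mem_insert, Finset.mem_singleton] at hZ
    rcases hZ with rfl | rfl | rfl <;> assumption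
  · intro Z hZ
    simp only [Finset.mem_insert, Finset.mem_singleton] at hZ
    rcases hZ with rfl | rfl <;> assumption
  · intro A hA B hB hne
    simp only [Finset.mem_insert, Finset.mem_singleton] at hA hB
    rcases hA with rfl | rfl <;> rcases hB with rfl | rfl
    · exact absurd rfl hne
    · exact hd
    · exact hd.symm
    · exact absurd rfl hne
  · intro v
    have := congrArg (fun S => v ∈ S) hu
    simp only [Finset.mem_union] at this
    simp [this, or_assoc]

theorem MinC.ma {C : Finset (Finset V)} (h : MinC G C) (hX : X ∈ C) (hY : Y ∈ C)
    (hne : X ≠ Y) {u w : V} (hu : En G X u) (hw : En G Y w) : ¬ G.Adj u w := by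
  intro ha
  obtain ⟨a, hu⟩ := hu
  obtain ⟨b, hw⟩ := hw
  exact h.merge2 hX hY hne (hu.join hw.symm (h.1.dj X hX Y hY hne) ha).tr

theorem MinC.mb {C : Finset (Finset V)} (h : MinC G C) {P Q R : Finset V} (hP : P ∈ C) (hQ : Q ∈ C)
    (hR : R ∈ C) (h1 : P ≠ Q) (h2 : P ≠ R) (h3 : Q ≠ R) (hp : HP G P m p) {i : ℕ}
    (hi : i + 1 < m) {u w : V} (hu : En G Q u) (hw : En G R w) (hau : G.Adj (p i) u)
    (haw : G.Adj (p (i+1)) w) : False := by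
  obtain ⟨a, hu⟩ := hu
  obtain ⟨b, hw⟩ := hw
  obtain ⟨P1, P2, e, hd, e1, e2, -, -⟩ := hp.split hi
  have d1 := h.1.dj P hP Q hQ h1
  have d2 := h.1.dj P hP R hR h2
  have d3 := h.1.dj Q hQ R hR h3
  rw [e, Finset.disjoint_union_left] at d1 d2
  have t1 := e1.join hu.symm d1.1 hau
  have t2 := hw.join e2 d2.2.symm haw.symm
  refine h.merge3 hP hQ hR h1 h2 h3 t1.tr t2.tr ?_ ?_
  · simp only [Finset.disjoint_union_left, Finset.disjoint_union_right]
    exact ⟨⟨d2.1, d3⟩, hd, d1.2.symm⟩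
  · rw [e]
    ext v
    simp only [Finset.mem_union]
    tauto

theorem MinC.mc {C : Finset (Finset V)} (h : MinC G C) {P Q : Finset V} (hP : P ∈ C) (hQ : Q ∈ C)
    (h1 : P ≠ Q) (hp : HP G P m p) {i : ℕ}
    (hi : i + 1 < m) {u w : V} (hu : En2 G Q u w) (hau : G.Adj (p i) u)
    (haw : G.Adj (p (i+1)) w) : False := by
  obtain ⟨P1, P2, e, hd, e1, e2, -, -⟩ := hp.split hi
  have d1 := h.1.dj P hP Q hQ h1
  rw [e, Finset.disjoint_union_left] at d1
  have t1 := e1.join hu d1.1 hau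
  have t2 := t1.join e2 (by
    rw [Finset.disjoint_union_left]
    exact ⟨hd, d1.2.symm⟩) haw.symm
  refine h.merge2 hP hQ h1 ?_
  convert t2.tr using 1
  rw [e]
  ext v
  simp only [Finset.mem_union]
  tauto

theorem HP.ins (hp : HP G X m p) {i : ℕ} (hi : i + 1 < m) {u : V} (hu : u ∉ X)
    (h1 : G.Adj u (p i)) (h2 : G.Adj u (p (i+1))) : En2 G (X ∪ {u}) (p 0) (p (m-1)) := by
  obtain ⟨P1, P2, e, hd, e1, e2, -, -⟩ := hp.split hi
  rw [e, Finset.mem_union, not_or] at hu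
  have t1 := e1.join (En2.single u) (by simpa using hu.1) h1.symm
  have t2 := t1.join e2 (by
    rw [Finset.disjoint_union_left]
    exact ⟨hd, by simpa using hu.2⟩) h2
  convert t2 using 1
  rw [e]
  ext v
  simp only [Finset.mem_union]
  tauto

/-- a non-end vertex with an outside neighbour is joined to all its inner neighbours on the path -/
theorem HP.consec (hc : IsCub G) (hp : HP G X m p) {i : ℕ} (hi : i < m) {b u : V} (hb : b ∈ X)
    (hu : u ∉ X) (hab : G.Adj (p i) b) (hau : G.Adj (p i) u) (hE : ¬ En G X (p i)) :
    (0 < i ∧ b = p (i - 1)) ∨ (i + 1 < m ∧ b = p (i+1)) := by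
  have h0 : i ≠ 0 := by
    rintro rfl
    exact hE hp.en0
  have h1 : i ≠ m - 1 := by
    rintro rfl
    exact hE hp.en
  have a1 : G.Adj (p i) (p (i-1)) := (hp.adj' (by omega) hi).symm
  have a2 : G.Adj (p i) (p (i+1)) := hp.adj i (by omega)
  rcases hc.only a1 a2 hau (hp.ne (by omega) (by omega) (by omega)) (by
    rintro rfl
    exact hu (hp.memX (by omega))) (by
    rintro rfl
    exact hu (hp.memX (by omega))) hab with e | e | e
  · exact Or.inl ⟨by omega, e⟩
  · exact Or.inr ⟨by omega, e⟩
  · exact absurd (e ▸ hb) hu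

theorem MinC.md (hc : IsCub G) {C : Finset (Finset V)} (h : MinC G C) {P X' Z : Finset V}
    {u a b v z y : V} (hX : X ∈ C) (hP : P ∈ C) (hZ : Z ∈ C) (hXP : X ≠ P) (hXZ : X ≠ Z)
    (e : X = X' ∪ {u}) (hu : u ∉ X') (hv : En2 G X' z v) (haP : a ∈ P) (hbP : b ∈ P)
    (hua : G.Adj u a) (hub : G.Adj u b) (hab : G.Adj a b) (haE : ¬ En G P a)
    (hy : En G Z y) (hvy : G.Adj v y) : False := by
  have dXP := h.1.dj X hX P hP hXP
  have dXZ := h.1.dj X hX Z hZ hXZ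
  have huP : u ∉ P := Finset.disjoint_left.1 dXP (by simp [e])
  have huZ : u ∉ Z := Finset.disjoint_left.1 dXZ (by simp [e])
  rw [e, Finset.disjoint_union_left] at dXP dXZ
  have key : ∀ l r, HP G P l r → En2 G (P ∪ {u}) (r 0) (r (l-1)) := by
    intro l r hr
    obtain ⟨i, hi, rfl⟩ := (hr.mem a).1 haP
    rcases hr.consec hc hi hbP huP hab hua.symm haE with ⟨h1, rfl⟩ | ⟨h1, rfl⟩
    · refine hr.ins (i := i - 1) (by omega) huP hub ?_
      convert hua using 2; omega
    · exact hr.ins h1 huP hua hub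
  obtain ⟨s, l, r, hr, e1, e2⟩ := hy
  by_cases hPZ : P = Z
  · subst hPZ
    have t := key l r hr
    rw [e2] at t
    have t2 := hv.join t.symm (by
      rw [Finset.disjoint_union_right]
      exact ⟨dXP.1, by simpa using hu⟩) hvy
    refine h.merge2 hX hP hXP ?_
    convert t2.tr using 1
    rw [e]
    ext v
    simp only [Finset.mem_union]
    tauto
  · obtain ⟨s', w', l', r', hr', -, -⟩ := h.1.tr P hP
    have t := key l' r' hr'
    have hy : En2 G Z s y := ⟨l, r, hr, e1, e2⟩
    have t2 := hv.join hy.symm dXZ.1 hvy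
    refine h.merge3 hX hP hZ hXP hXZ hPZ t.tr t2.tr ?_ ?_
    · simp only [Finset.disjoint_union_left, Finset.disjoint_union_right]
      exact ⟨⟨dXP.1.symm, by simpa using hu⟩, h.1.dj P hP Z hZ hPZ, by simpa using huZ⟩
    · rw [e]
      ext v
      simp only [Finset.mem_union]
      tauto

end

section

variable {V : Type*} [DecidableEq V]
variable {G : SimpleGraph V} {X Y : Finset V} {m : ℕ} {p : ℕ → V}
variable {q : ℕ → V} {j : ℕ}
open Classical in
noncomputable def nFull (G : SimpleGraph V) (C : Finset (Finset V)) : ℕ :=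
  (C.filter (fun X => Full G X)).card

def Best (G : SimpleGraph V) (C : Finset (Finset V)) : Prop :=
  MinC G C ∧ ∀ C', MinC G C' → nFull G C ≤ nFull G C'

theorem exists_min_of {α : Type*} (P : α → Prop) (f : α → ℕ) (h : ∃ a, P a) :
    ∃ a, P a ∧ ∀ b, P b → f a ≤ f b := by
  classical
  have h' : ∃ n a, P a ∧ f a = n := by
    obtain ⟨a, ha⟩ := h
    exact ⟨_, a, ha, rfl⟩
  obtain ⟨a, ha, e⟩ := Nat.find_spec h'
  refine ⟨a, ha, fun b hb => ?_⟩
  rw [e]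
  exact Nat.find_min' h' ⟨b, hb, rfl⟩

theorem exists_best [Fintype V] (G : SimpleGraph V) : ∃ C, Best G C := by
  have h0 : ∃ C, Cov G C := by
    refine ⟨Finset.univ.image (fun v => ({v} : Finset V)), ?_, ?_, ?_⟩
    · intro X hX
      simp only [Finset.mem_image, Finset.mem_univ, true_and] at hX
      obtain ⟨v, rfl⟩ := hX
      exact (En2.single v).tr
    · intro X hX Y hY hne
      simp only [Finset.mem_image, Finset.mem_univ, true_and] at hX hY
      obtain ⟨v, rfl⟩ := hX
      obtain ⟨w, rfl⟩ := hY
      rw [Finset.disjoint_singleton]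
      rintro rfl
      exact hne rfl
    · intro v
      exact ⟨{v}, by simp, by simp⟩
  obtain ⟨C, h1, h2⟩ := exists_min_of (Cov G) Finset.card h0
  obtain ⟨C', h3, h4⟩ := exists_min_of (MinC G) (nFull G) ⟨C, h1, h2⟩
  exact ⟨C', h3, h4⟩

/-- moving the token -/
theorem Best.move {C : Finset (Finset V)} (h : Best G C) {P Q : Finset V} (hP : P ∈ C) (hQ : Q ∈ C)
    (hPQ : P ≠ Q) (hPf : Full G P) (hQf : ¬ Full G Q) {x : V} (hx : x ∈ P) (hq : HP G Q m q)
    {i : ℕ} (hi : i + 1 < m) (hxy : G.Adj x (q i)) :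
    ∃ C' W, Best G C' ∧ W ∈ C' ∧ Full G W ∧ q (i+1) ∈ W ∧ W ⊆ Q ∧
      ∀ Z ∈ C, Z ≠ P → Z ≠ Q → Z ∈ C' := by
  classical
  obtain ⟨Q1, W, e, hd, e1, e2, hm1, hm2⟩ := hq.split hi
  have hPQd := h.1.1.dj P hP Q hQ hPQ
  rw [e, Finset.disjoint_union_right] at hPQd
  obtain ⟨s, hs⟩ := hPf x hx
  have t1 := hs.join e1.symm hPQd.1 hxy
  have hUW : Disjoint (P ∪ Q1) W := by
    rw [Finset.disjoint_union_left]
    exact ⟨hPQd.2, hd⟩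
  have hWm : q (i+1) ∈ W := hm2 _ (by omega) hi
  have hne : P ∪ Q1 ≠ W := by
    rintro e'
    exact Finset.disjoint_left.1 hUW (e' ▸ hWm) hWm
  have hA : ({P, Q} : Finset (Finset V)) ⊆ C := by
    intro Z hZ
    simp only [Finset.mem_insert, Finset.mem_singleton] at hZ
    rcases hZ with rfl | rfl <;> assumption
  have hcov : Cov G ((C \ {P, Q}) ∪ {P ∪ Q1, W}) := by
    refine h.1.1.replace hA ?_ ?_ ?_
    · intro Z hZ
      simp only [Finset.mem_insert, Finset.mem_singleton] at hZ
      rcases hZ with rfl | rfl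
      · exact t1.tr
      · exact e2.tr
    · intro A hA B hB hn
      simp only [Finset.mem_insert, Finset.mem_singleton] at hA hB
      rcases hA with hA | hA <;> rcases hB with hB | hB <;> rw [hA, hB] at hn ⊢
      · exact absurd rfl hn
      · exact hUW
      · exact hUW.symm
      · exact absurd rfl hn
    · intro v
      rw [e]
      simp [or_assoc]
  have hcard : ((C \ {P, Q}) ∪ {P ∪ Q1, W}).card ≤ C.card := by
    have h2 := Finset.card_union_le (C \ {P, Q}) {P ∪ Q1, W}
    have h3 := Finset.card_sdiff_of_subset hA
    have h4 := Finset.card_le_card hA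
    rw [Finset.card_pair hPQ] at h3 h4
    have := Finset.card_le_two (a := P ∪ Q1) (b := W)
    omega
  have hmin : MinC G ((C \ {P, Q}) ∪ {P ∪ Q1, W}) :=
    ⟨hcov, fun C' hC' => hcard.trans (h.1.2 C' hC')⟩
  have hUm : P ∪ Q1 ∈ (C \ {P, Q}) ∪ {P ∪ Q1, W} := by simp
  have hWmem : W ∈ (C \ {P, Q}) ∪ {P ∪ Q1, W} := by simp
  have hUn : ¬ Full G (P ∪ Q1) := by
    intro hf
    exact hmin.ma hUm hWmem hne (hf (q i) (Finset.mem_union_right _ (hm1 i (le_refl _))))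
      ⟨_, e2.symm⟩ (hq.adj i hi)
  have hPm : P ∈ C.filter (fun X => Full G X) := by simp [hP, hPf]
  have hsub : ((C \ {P, Q}) ∪ {P ∪ Q1, W}).filter (fun X => Full G X) ⊆
      (C.filter (fun X => Full G X)).erase P ∪ (({W} : Finset (Finset V)).filter
        (fun X => Full G X)) := by
    intro Z hZ
    simp only [Finset.mem_filter, Finset.mem_union, Finset.mem_sdiff, Finset.mem_insert,
      Finset.mem_singleton, not_or, Finset.mem_erase] at hZ ⊢
    obtain ⟨h1 | rfl | rfl, h2⟩ := hZ
    · exact Or.inl ⟨h1.2.1, h1.1, h2⟩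
    · exact absurd h2 hUn
    · exact Or.inr ⟨rfl, h2⟩
  have hc1 := (Finset.card_le_card hsub).trans (Finset.card_union_le _ _)
  have hc2 := Finset.card_erase_of_mem hPm
  have hc3 := Finset.card_pos.2 ⟨P, hPm⟩
  have hWf : Full G W := by
    by_contra hn
    rw [Finset.filter_singleton, if_neg hn, Finset.card_empty] at hc1
    have := h.2 _ hmin
    unfold nFull at this
    omega
  refine ⟨_, W, ⟨hmin, fun C' hC' => ?_⟩, hWmem, hWf, hWm, ?_, ?_⟩
  · have := h.2 C' hC'
    rw [Finset.filter_singleton, if_pos hWf, Finset.card_singleton] at hc1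
    unfold nFull at *
    omega
  · rw [e]; exact Finset.subset_union_right
  · intro Z hZ h1 h2
    simp [hZ, h1, h2]

theorem Best.token (hc : IsCub G) (d : ℕ) : ∀ (C : Finset (Finset V)), Best G C →
    ∀ P ∈ C, ∀ P' ∈ C, P ≠ P' → Full G P → Full G P' → ∀ x ∈ P, ∀ w ∈ P',
    ∀ W : G.Walk x w, W.length = d → False := by
  induction d using Nat.strong_induction_on with
  | _ d ih =>
  intro C h P hP P' hP' hne hf hf' x hx w hw W hW
  cases W with
  | nil => exact hne (h.1.1.eq hP hP' hx hw)
  | @cons _ y _ hxy W =>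
    rw [SimpleGraph.Walk.length_cons] at hW
    by_cases hyP : y ∈ P
    · exact ih (d-1) (by omega) C h P hP P' hP' hne hf hf' y hyP w hw W (by omega)
    obtain ⟨Q, hQ, hyQ⟩ := h.1.1.cov y
    have hPQ : P ≠ Q := by
      rintro rfl
      exact hyP hyQ
    have hyE : ¬ En G Q y := fun hE => h.1.ma hP hQ hPQ (hf x hx) hE hxy
    have hQf : ¬ Full G Q := fun hF => hyE (hF y hyQ)
    have hQP' : P' ≠ Q := by
      rintro rfl
      exact hQf hf'
    cases W with
    | nil => exact hQP' (h.1.1.eq hP' hQ hw hyQ)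
    | @cons _ z _ hyz W =>
      rw [SimpleGraph.Walk.length_cons] at hW
      have fin : ∀ l (r : ℕ → V), HP G Q l r → ∀ i, i + 1 < l → r i = y → r (i+1) = z → False := by
        intro l r hr i hi e1 e2
        obtain ⟨C', W', hb, hW', hWf, hzW, hsub, hall⟩ := h.move hP hQ hPQ hf hQf hx hr hi
          (by rw [e1]; exact hxy)
        rw [e2] at hzW
        refine ih (d-2) (by omega) C' hb W' hW' P' (hall P' hP' hne.symm hQP') ?_ hWf hf' z hzW w hw W
          (by omega)
        rintro rfl
        exact hQP' (h.1.1.eq hP' hQ hzW (hsub hzW))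
      by_cases hzQ : z ∈ Q
      · obtain ⟨a, b, l, r, hr, -, -⟩ := h.1.1.tr Q hQ
        obtain ⟨i, hi, rfl⟩ := (hr.mem y).1 hyQ
        have hxQ : x ∉ Q := fun hxQ => hPQ (h.1.1.eq hP hQ hx hxQ)
        rcases hr.consec hc hi hzQ hxQ hyz hxy.symm hyE with ⟨h1, rfl⟩ | ⟨h1, rfl⟩
        · refine fin l _ hr.rev (l - 1 - i) (by omega) ?_ ?_
          · show r (l - 1 - (l - 1 - i)) = r i
            congr 1; omega
          · show r (l - 1 - (l - 1 - i + 1)) = r (i - 1)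
            congr 1; omega
        · exact fin l r hr i h1 rfl rfl
      · obtain ⟨a, b, l, r, hr, -, -⟩ := h.1.1.tr Q hQ
        obtain ⟨i, hi, rfl⟩ := (hr.mem y).1 hyQ
        have hxQ : x ∉ Q := fun hxQ => hPQ (h.1.1.eq hP hQ hx hxQ)
        have h0 : i ≠ 0 := by
          rintro rfl
          exact hyE hr.en0
        have h1 : i ≠ l - 1 := by
          rintro rfl
          exact hyE hr.en
        have a1 : G.Adj (r i) (r (i-1)) := (hr.adj' (by omega) hi).symm
        have a2 : G.Adj (r i) (r (i+1)) := hr.adj i (by omega)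
        have e : z = x := by
          rcases hc.only a1 a2 hxy.symm (hr.ne (by omega) (by omega) (by omega)) (by
            rintro rfl
            exact hxQ (hr.memX (by omega))) (by
            rintro rfl
            exact hxQ (hr.memX (by omega))) hyz with e | e | e
          · exact absurd (e ▸ hr.memX (by omega)) hzQ
          · exact absurd (e ▸ hr.memX (by omega)) hzQ
          · exact e
        subst e
        exact ih (d-2) (by omega) C h P hP P' hP' hne hf hf' z hx w hw W (by omega)

theorem Best.one (hc : IsCub G) (hcon : G.Connected) {C : Finset (Finset V)} (h : Best G C) :
    nFull G C ≤ 1 := by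
  classical
  unfold nFull
  rw [Finset.card_le_one]
  intro P hP P' hP'
  rw [Finset.mem_filter] at hP hP'
  by_contra hne
  obtain ⟨x, hx⟩ := (h.1.1.tr P hP.1).nonempty
  obtain ⟨w, hw⟩ := (h.1.1.tr P' hP'.1).nonempty
  obtain ⟨W⟩ := hcon.preconnected x w
  exact Best.token hc _ C h P hP.1 P' hP'.1 hne hP.2 hP'.2 x hx w hw W rfl

end

section

variable {V : Type*} [DecidableEq V]
variable {G : SimpleGraph V} {X Y : Finset V} {m : ℕ} {p : ℕ → V}
variable {q : ℕ → V} {j : ℕ}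
/-- Requests issued at one end of a path. -/
def SideReq (G : SimpleGraph V) (X : Finset V) (m : ℕ) (p : ℕ → V) (j : ℕ)
    (R : Finset (V × V)) : Prop :=
  (∀ r ∈ R, ER G X m p j r.1 ∧ G.Adj r.1 r.2 ∧ r.2 ∉ X) ∧
  ((j = m - 2 ∧ Chordless G m p ∧ ∃ a b, a ≠ b ∧ R = {(p (m-1), a), (p (m-1), b)}) ∨
   ∃ T : Finset ℕ, (∀ i ∈ T, j ≤ i ∧ i + 1 < m ∧ Gd G X p i) ∧
    4 ≤ T.card + if R.Nonempty then R.card + 1 else 0)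

def PartReq (G : SimpleGraph V) (X : Finset V) (m : ℕ) (p : ℕ → V)
    (R : Finset (V × V)) : Prop :=
  HP G X m p ∧ (∀ r ∈ R, En G X r.1 ∧ G.Adj r.1 r.2 ∧ r.2 ∉ X) ∧
  ((∃ T : Finset ℕ, (∀ i ∈ T, i + 1 < m ∧ Gd G X p i) ∧
    8 ≤ T.card + if R.Nonempty then R.card + 1 else 0) ∨
   ∃ p' j j' Rr Rl, HP G X m p' ∧ (∀ i, i < m → p' i = p (m - 1 - i)) ∧
    j + 1 < m ∧ j' + 1 < m ∧ m - 1 ≤ j + j' ∧ SideReq G X m p j Rr ∧ SideReq G X m p' j' Rl ∧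
    R = Rr ∪ Rl)

theorem exists_requests (S : Finset V) (hS : ∀ w ∈ S, Out G X w) :
    ∃ R : Finset (V × V), (∀ r ∈ R, r.1 ∈ S ∧ G.Adj r.1 r.2 ∧ r.2 ∉ X) ∧ R.card = S.card := by
  classical
  have h : ∀ w, ∃ a, w ∈ S → G.Adj w a ∧ a ∉ X := by
    intro w
    by_cases hw : w ∈ S
    · obtain ⟨a, ha⟩ := hS w hw
      exact ⟨a, fun _ => ha⟩
    · exact ⟨w, fun h => absurd h hw⟩
  choose f hf using h
  refine ⟨S.image (fun w => (w, f w)), ?_, ?_⟩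
  · intro r hr
    rw [Finset.mem_image] at hr
    obtain ⟨w, hw, rfl⟩ := hr
    exact ⟨hw, hf w hw⟩
  · apply Finset.card_image_of_injective
    intro a b e
    exact (Prod.mk.inj e).1

theorem RightC.req (hc : IsCub G) (hp : HP G X m p) (hm : 3 ≤ m) (h : RightC G X m p j) :
    ∃ R, SideReq G X m p j R := by
  rcases h with ⟨rfl, h⟩ | ⟨S, T, hS, hT, h4⟩
  · have h1 : G.Adj (p (m-1)) (p (m-2)) := (hp.adj' (by omega) (by omega)).symm
    obtain ⟨x, y, z, hxy, hxz, hyz, hn⟩ := hc (p (m-1))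
    have hout : ∀ w, G.Adj (p (m-1)) w → w ≠ p (m-2) → w ∉ X := by
      intro w hw hne hwX
      obtain ⟨i, hi, rfl⟩ := (hp.mem w).1 hwX
      exact hne (by rw [h i hi hw])
    have key : ∀ a b, a ≠ b → G.Adj (p (m-1)) a → G.Adj (p (m-1)) b → a ≠ p (m-2) →
        b ≠ p (m-2) → ∃ R, SideReq G X m p (m-2) R := by
      intro a b hab ha hb h2 h3
      refine ⟨{(p (m-1), a), (p (m-1), b)}, ?_, Or.inl ⟨rfl, h, a, b, hab, rfl⟩⟩
      intro r hr
      simp only [Finset.mem_insert, Finset.mem_singleton] at hr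
      rcases hr with rfl | rfl
      · exact ⟨⟨p, hp.rp, rfl⟩, ha, hout a ha h2⟩
      · exact ⟨⟨p, hp.rp, rfl⟩, hb, hout b hb h3⟩
    have hx := (hn x).2 (by simp)
    have hy := (hn y).2 (by simp)
    have hz := (hn z).2 (by simp)
    rcases (hn _).1 h1 with e | e | e
    · exact key y z hyz hy hz (by rw [e]; exact hxy.symm) (by rw [e]; exact hxz.symm)
    · exact key x z hxz hx hz (by rw [e]; exact hxy) (by rw [e]; exact hyz.symm)
    · exact key x y hxy hx hy (by rw [e]; exact hxz) (by rw [e]; exact hyz)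
  · obtain ⟨R, hR, hcard⟩ := exists_requests (X := X) S (fun w hw => (hS w hw).2)
    refine ⟨R, fun r hr => ⟨(hS _ (hR r hr).1).1, (hR r hr).2⟩, Or.inr ⟨T, hT, ?_⟩⟩
    rw [hcard]
    have : R.Nonempty ↔ S.Nonempty := by rw [← Finset.card_pos, ← Finset.card_pos, hcard]
    simp only [this]
    exact h4

theorem part_req (hc : IsCub G) {p0 : ℕ → V} (hp0 : HP G X m p0) (hf : ¬ Full G X)
    {o : V} (hoX : o ∈ X) (ho : Out G X o) : ∃ p R, PartReq G X m p R := by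
  have hm := nonfull_three hp0 hf
  obtain ⟨p, p', hp, hp', hpp, h⟩ := struct hc hp0 hf hoX ho
  rcases h with ⟨S, T, hS, hT, h8⟩ | ⟨j, j', hj, hj', hjj, hr, hl⟩
  · obtain ⟨R, hR, hcard⟩ := exists_requests (X := X) S (fun w hw => (hS w hw).2)
    refine ⟨p, R, hp, fun r hr => ⟨(hS _ (hR r hr).1).1, (hR r hr).2⟩, Or.inl ⟨T, hT, ?_⟩⟩
    rw [hcard]
    have : R.Nonempty ↔ S.Nonempty := by rw [← Finset.card_pos, ← Finset.card_pos, hcard]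
    simp only [this]
    exact h8
  · obtain ⟨Rr, hRr⟩ := hr.req hc hp hm
    obtain ⟨Rl, hRl⟩ := hl.req hc hp' hm
    refine ⟨p, Rr ∪ Rl, hp, ?_, Or.inr ⟨p', j, j', Rr, Rl, hp', hpp, hj, hj', hjj, hRr, hRl, rfl⟩⟩
    intro r hr
    rcases Finset.mem_union.1 hr with hr | hr
    · exact ⟨(hRr.1 r hr).1.en, (hRr.1 r hr).2⟩
    · exact ⟨(hRl.1 r hr).1.en, (hRl.1 r hr).2⟩

structure Ctx (G : SimpleGraph V) (C : Finset (Finset V)) (p : Finset V → ℕ → V)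
    (R : Finset V → Finset (V × V)) : Prop where
  cub : IsCub G
  min : MinC G C
  hp : ∀ X ∈ C, HP G X X.card (p X)
  req : ∀ X ∈ C, ∀ r ∈ R X, En G X r.1 ∧ G.Adj r.1 r.2 ∧ r.2 ∉ X

/-- requested vertices -/
def IsA (C : Finset (Finset V)) (R : Finset V → Finset (V × V)) (a : V) : Prop :=
  ∃ X ∈ C, ∃ u, (u, a) ∈ R X

def Pr (C : Finset (Finset V)) (p : Finset V → ℕ → V) (R : Finset V → Finset (V × V))
    (a : V) : Prop :=
  ∃ P ∈ C, ∃ i, i + 1 < P.card ∧ p P (i+1) = a ∧ IsA C R (p P i)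

open Classical in
noncomputable def gg (C : Finset (Finset V)) (p : Finset V → ℕ → V)
    (R : Finset V → Finset (V × V)) (a : V) : ℕ := if Pr C p R a then 1 else 2

theorem gg_pos (C : Finset (Finset V)) (p : Finset V → ℕ → V)
    (R : Finset V → Finset (V × V)) (a : V) : 1 ≤ gg C p R a := by
  unfold gg
  split_ifs <;> omega

theorem gg_eq_two {C : Finset (Finset V)} {p : Finset V → ℕ → V}
    {R : Finset V → Finset (V × V)} {a : V} (h : ¬ Pr C p R a) : gg C p R a = 2 := by
  unfold gg
  rw [if_neg h]

namespace Ctx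

variable {C : Finset (Finset V)} {pp : Finset V → ℕ → V} {R : Finset V → Finset (V × V)}

theorem fst_mem (h : Ctx G C pp R) (hX : X ∈ C) {r : V × V} (hr : r ∈ R X) : r.1 ∈ X := by
  obtain ⟨s, l, q, hq, -, e⟩ := (h.req X hX r hr).1
  rw [← e]
  exact hq.memX (by have := hq.pos; omega)

theorem notEn (h : Ctx G C pp R) {P : Finset V} (hP : P ∈ C) {a : V} (ha : a ∈ P)
    (hA : IsA C R a) : ¬ En G P a ∧ Out G P a := by
  obtain ⟨X, hX, u, hu⟩ := hA
  have h1 := h.req X hX _ hu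
  have hne : X ≠ P := by
    rintro rfl
    exact h1.2.2 ha
  refine ⟨fun hE => h.min.ma hX hP hne h1.1 hE h1.2.1, u, h1.2.1.symm, fun huP => ?_⟩
  exact hne (h.min.1.eq hX hP (h.fst_mem hX hu) huP)

theorem notA (h : Ctx G C pp R) {P : Finset V} (hP : P ∈ C) {a : V} (ha : a ∈ P)
    (hN : Nn G P a) : ¬ IsA C R a := by
  intro hA
  have := h.notEn hP ha hA
  rcases hN with hN | hN
  · exact this.1 hN
  · exact hN this.2

theorem uniq (h : Ctx G C pp R) (hX : X ∈ C) (hY : Y ∈ C) {u w a : V} (hu : (u, a) ∈ R X)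
    (hw : (w, a) ∈ R Y) : u = w := by
  obtain ⟨P, hP, ha⟩ := h.min.1.cov a
  have h1 := h.req X hX _ hu
  have h2 := h.req Y hY _ hw
  have hau : G.Adj a u := h1.2.1.symm
  have haw : G.Adj a w := h2.2.1.symm
  have hE := h.notEn hP ha ⟨X, hX, u, hu⟩
  have hXP : X ≠ P := by
    rintro rfl
    exact h1.2.2 ha
  have hYP : Y ≠ P := by
    rintro rfl
    exact h2.2.2 ha
  have huP : u ∉ P := fun h' => hXP (h.min.1.eq hX hP (h.fst_mem hX hu) h')
  have hwP : w ∉ P := fun h' => hYP (h.min.1.eq hY hP (h.fst_mem hY hw) h')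
  have hr := h.hp P hP
  obtain ⟨i, hi, rfl⟩ := (hr.mem a).1 ha
  have g0 : i ≠ 0 := by
    rintro rfl
    exact hE.1 hr.en0
  have g1 : i ≠ P.card - 1 := by
    rintro rfl
    exact hE.1 hr.en
  have a1 : G.Adj (pp P i) (pp P (i-1)) := (hr.adj' (by omega) hi).symm
  have a2 : G.Adj (pp P i) (pp P (i+1)) := hr.adj i (by omega)
  rcases h.cub.only a1 a2 haw (hr.ne (by omega) (by omega) (by omega)) (by
    rintro e
    exact hwP (e ▸ hr.memX (by omega))) (by
    rintro e
    exact hwP (e ▸ hr.memX (by omega))) hau with e | e | e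
  · exact absurd (e ▸ hr.memX (by omega)) huP
  · exact absurd (e ▸ hr.memX (by omega)) huP
  · exact e

theorem pred (h : Ctx G C pp R) (hX : X ∈ C) {u a : V} (hu : (u, a) ∈ R X) (hP : Pr C pp R a) :
    ∃ P ∈ C, ∃ i, X ≠ P ∧ i + 1 < P.card ∧ pp P (i+1) = a ∧ ∃ w, (w, pp P i) ∈ R X ∧
      ¬ En2 G X u w := by
  obtain ⟨P, hP, i, hi, rfl, Y, hY, w, hw⟩ := hP
  have hr := h.hp P hP
  have h1 := h.req X hX _ hu
  have h2 := h.req Y hY _ hw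
  have hXP : X ≠ P := by
    rintro rfl
    exact h1.2.2 (hr.memX hi)
  have hYP : Y ≠ P := by
    rintro rfl
    exact h2.2.2 (hr.memX (by omega))
  have hXY : X = Y := by
    by_contra hXY
    exact h.min.mb hP hY hX hYP.symm hXP.symm (Ne.symm hXY) hr hi h2.1 h1.1 h2.2.1.symm h1.2.1.symm
  subst hXY
  refine ⟨P, hP, i, hXP, hi, rfl, w, hw, fun hE => ?_⟩
  exact h.min.mc hP hX hXP.symm hr hi hE.symm h2.2.1.symm h1.2.1.symm

theorem rec_bound (h : Ctx G C pp R) (hX : X ∈ C) {S : Finset (V × V)} (hS : S ⊆ R X)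
    (hne : S.Nonempty) (hE : ∀ s ∈ S, ∀ r ∈ R X, r ∉ S → En2 G X s.1 r.1) :
    S.card + 1 ≤ ∑ s ∈ S, gg C pp R s.2 := by
  have hidx : ∀ a, ∃ i, ∃ P ∈ C, i < P.card ∧ pp P i = a := by
    intro a
    obtain ⟨P, hP, ha⟩ := h.min.1.cov a
    obtain ⟨i, hi, e⟩ := ((h.hp P hP).mem a).1 ha
    exact ⟨i, P, hP, hi, e⟩
  choose idx hidx using hidx
  have hidx' : ∀ P ∈ C, ∀ i, i < P.card → idx (pp P i) = i := by
    intro P hP i hi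
    obtain ⟨Q, hQ, hl, e⟩ := hidx (pp P i)
    have : Q = P := h.min.1.eq hQ hP (e ▸ (h.hp Q hQ).memX hl) ((h.hp P hP).memX hi)
    subst this
    exact (h.hp Q hQ).inj _ _ hl hi e
  obtain ⟨s, hs, hmin⟩ := exists_min_of (fun s => s ∈ S) (fun s => idx s.2) hne
  have hg : gg C pp R s.2 = 2 := by
    apply gg_eq_two
    intro hP
    obtain ⟨P, hP, i, hXP, hi, e, w, hw, hn⟩ := h.pred hX (u := s.1) (hS hs) hP
    have hwS : (w, pp P i) ∈ S := by
      by_contra hwS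
      exact hn (hE s hs _ hw hwS)
    have := hmin _ hwS
    simp only at this
    rw [← e, hidx' P hP _ hi, hidx' P hP _ (by omega)] at this
    omega
  rw [← Finset.add_sum_erase S _ hs, hg]
  have h1 : (S.erase s).card • 1 ≤ ∑ x ∈ S.erase s, gg C pp R x.2 :=
    Finset.card_nsmul_le_sum _ _ _ (fun x _ => gg_pos C pp R x.2)
  rw [Finset.card_erase_of_mem hs] at h1
  have := Finset.card_pos.2 hne
  simp only [smul_eq_mul, mul_one] at h1
  omega

theorem chordless_pred (h : Ctx G C pp R) (hX : X ∈ C) (hq : HP G X m q) (hm : 3 ≤ m)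
    {a b : V} (ha : (q (m-1), a) ∈ R X) (hb : (q (m-1), b) ∈ R X)
    (hE : ∀ r ∈ R X, r ≠ (q (m-1), a) → r ≠ (q (m-1), b) → En2 G X (q (m-1)) r.1)
    (hP : Pr C pp R a) : ¬ IsA C R (q (m-2)) := by
  rintro ⟨Z, hZ, y, hy⟩
  obtain ⟨P, hP, i, hXP, hi, e, w, hw, hn⟩ := h.pred hX ha hP
  have hr := h.hp P hP
  have hca : pp P i ≠ a := by
    rw [← e]
    exact hr.ne (by omega) hi (by omega)
  have hcb : pp P i = b := by
    by_contra hcb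
    refine hn (hE _ hw ?_ ?_)
    · intro e'; exact hca (Prod.mk.inj e').2
    · intro e'; exact hcb (Prod.mk.inj e').2
  have h1 := h.req X hX _ ha
  have h2 := h.req X hX _ hb
  have h3 := h.req Z hZ _ hy
  have haP : a ∈ P := by rw [← e]; exact hr.memX hi
  have hbP : b ∈ P := by rw [← hcb]; exact hr.memX (by omega)
  have hXZ : X ≠ Z := by
    rintro rfl
    exact h3.2.2 (hq.memX (by omega))
  obtain ⟨X1, X2, eX, hd, e1, e2, hm1, hm2⟩ := hq.split (i := m - 2) (by omega)
  have hX2 : X2 = {q (m-1)} := by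
    ext v
    rw [Finset.mem_singleton]
    constructor
    · intro hv
      obtain ⟨l, hl, rfl⟩ := (hq.mem v).1 (by rw [eX]; exact Finset.mem_union_right _ hv)
      by_cases hl2 : l ≤ m - 2
      · exact absurd hv (Finset.disjoint_left.1 hd (hm1 l hl2))
      · congr 1; omega
    · rintro rfl
      exact hm2 _ (by omega) (by omega)
  rw [hX2] at eX hd
  refine h.min.md h.cub hX hP hZ hXP hXZ eX (by simpa using hd) e1 haP hbP h1.2.1 h2.2.1 ?_
    (h.notEn hP haP ⟨X, hX, _, ha⟩).1 h3.1 h3.2.1.symm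
  rw [← e, ← hcb]
  exact (hr.adj i hi).symm

theorem side (h : Ctx G C pp R) (hX : X ∈ C) (hq : HP G X m q) (hm : 3 ≤ m)
    {S : Finset (V × V)} (hSR : SideReq G X m q j S) (hS : S ⊆ R X)
    (hE : ∀ s ∈ S, ∀ r ∈ R X, r ∉ S → En2 G X s.1 r.1) :
    ∃ T : Finset ℕ, (∀ i ∈ T, j ≤ i ∧ i + 1 < m ∧ ¬ IsA C R (q i) ∧ ¬ IsA C R (q (i+1))) ∧
      4 ≤ T.card + ∑ s ∈ S, gg C pp R s.2 := by
  obtain ⟨-, ⟨rfl, -, a, b, hab, e⟩ | ⟨T, hT, h4⟩⟩ := hSR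
  · have hne : (q (m-1), a) ≠ (q (m-1), b) := fun e' => hab (Prod.mk.inj e').2
    have haS : (q (m-1), a) ∈ S := by simp [e]
    have hbS : (q (m-1), b) ∈ S := by simp [e]
    have h3 := h.rec_bound hX hS ⟨_, haS⟩ hE
    have hcard : S.card = 2 := by rw [e, Finset.card_pair hne]
    have hsum : ∑ s ∈ S, gg C pp R s.2 = gg C pp R a + gg C pp R b := by
      rw [e, Finset.sum_pair hne]
    have hEE : ∀ r ∈ R X, r ≠ (q (m-1), a) → r ≠ (q (m-1), b) → En2 G X (q (m-1)) r.1 := by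
      intro r hr h1 h2
      refine hE _ haS r hr ?_
      simp [e, h1, h2]
    by_cases hA : IsA C R (q (m-2))
    · refine ⟨∅, by simp, ?_⟩
      have g1 : ¬ Pr C pp R a := fun hP =>
        h.chordless_pred hX hq hm (hS haS) (hS hbS) hEE hP hA
      have g2 : ¬ Pr C pp R b := fun hP =>
        h.chordless_pred hX hq hm (hS hbS) (hS haS) (fun r hr h1 h2 => hEE r hr h2 h1) hP hA
      rw [hsum, gg_eq_two g1, gg_eq_two g2]
      omega
    · refine ⟨{m-2}, ?_, ?_⟩
      · intro i hi
        rw [Finset.mem_singleton] at hi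
        subst hi
        refine ⟨le_refl _, by omega, hA, ?_⟩
        have e' : m - 2 + 1 = m - 1 := by omega
        rw [e']
        exact h.notA hX (hq.memX (by omega)) (Or.inl hq.en)
      · rw [Finset.card_singleton]
        omega
  · refine ⟨T, ?_, ?_⟩
    · intro i hi
      obtain ⟨h1, h2, h3, h5⟩ := hT i hi
      exact ⟨h1, h2, h.notA hX (hq.memX (by omega)) h3, h.notA hX (hq.memX h2) h5⟩
    · by_cases hne : S.Nonempty
      · have h3 := h.rec_bound hX hS hne hE
        rw [if_pos hne] at h4
        omega
      · rw [if_neg hne] at h4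
        omega

open Classical in
theorem local8 (h : Ctx G C pp R) (hX : X ∈ C) (hf : ¬ Full G X)
    (hR : PartReq G X X.card (pp X) (R X)) :
    8 ≤ ((Finset.range (X.card - 1)).filter
        (fun i => ¬ IsA C R (pp X i) ∧ ¬ IsA C R (pp X (i+1)))).card +
      ∑ r ∈ R X, gg C pp R r.2 := by
  obtain ⟨hp, -, ⟨T, hT, h8⟩ | ⟨p', j, j', Rr, Rl, hp', hpp, hj, hj', hjj, hr, hl, e⟩⟩ := hR
  · have hsub : T ⊆ (Finset.range (X.card - 1)).filter
        (fun i => ¬ IsA C R (pp X i) ∧ ¬ IsA C R (pp X (i+1))) := by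
      intro i hi
      obtain ⟨h2, h3, h5⟩ := hT i hi
      rw [Finset.mem_filter, Finset.mem_range]
      exact ⟨by omega, h.notA hX (hp.memX (by omega)) h3, h.notA hX (hp.memX h2) h5⟩
    have hc := Finset.card_le_card hsub
    by_cases hne : (R X).Nonempty
    · have h3 := h.rec_bound hX (le_refl _) hne (fun s hs r hr hn => absurd hr hn)
      rw [if_pos hne] at h8
      omega
    · rw [if_neg hne] at h8
      omega
  · have hm := nonfull_three hp hf
    have hcomb : ∀ r ∈ Rr, ∀ l ∈ Rl, En2 G X l.1 r.1 := fun r h1 l h2 =>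
      er_combine hp hpp hj hjj (hr.1 r h1).1 (hl.1 l h2).1
    have hdisj : Disjoint Rr Rl := by
      rw [Finset.disjoint_left]
      intro r h1 h2
      obtain ⟨l, q, hq, e1, e2⟩ := hcomb r h1 r h2
      have h3 := hq.inj 0 (l-1) hq.pos (by have := hq.pos; omega) (e1.trans e2.symm)
      have := hq.card
      omega
    obtain ⟨T, hT, h4⟩ := h.side hX hp hm hr (by rw [e]; exact Finset.subset_union_left) (by
      intro s hs r hr hn
      rw [e, Finset.mem_union] at hr
      rcases hr with hr | hr
      · exact absurd hr hn
      · exact (hcomb s hs r hr).symm)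
    obtain ⟨T', hT', h4'⟩ := h.side hX hp' hm hl (by rw [e]; exact Finset.subset_union_right) (by
      intro s hs r hr hn
      rw [e, Finset.mem_union] at hr
      rcases hr with hr | hr
      · exact hcomb r hr s hs
      · exact absurd hr hn)
    have hinj : Set.InjOn (fun i => X.card - 2 - i) (T' : Set ℕ) := by
      intro a ha b hb e
      have h1 := (hT' a ha).2.1
      have h2 := (hT' b hb).2.1
      simp only at e
      omega
    have hTT : Disjoint T (T'.image (fun i => X.card - 2 - i)) := by
      rw [Finset.disjoint_left]
      intro a ha hb
      rw [Finset.mem_image] at hb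
      obtain ⟨b, hb, e⟩ := hb
      have h1 := (hT a ha).1
      have h2 := (hT' b hb).1
      have h3 := (hT' b hb).2.1
      omega
    have hsub : T ∪ T'.image (fun i => X.card - 2 - i) ⊆ (Finset.range (X.card - 1)).filter
        (fun i => ¬ IsA C R (pp X i) ∧ ¬ IsA C R (pp X (i+1))) := by
      intro i hi
      rw [Finset.mem_filter, Finset.mem_range]
      rcases Finset.mem_union.1 hi with hi | hi
      · obtain ⟨h1, h2, h3⟩ := hT i hi
        exact ⟨by omega, h3⟩
      · rw [Finset.mem_image] at hi
        obtain ⟨b, hb, rfl⟩ := hi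
        obtain ⟨h1, h2, h3, h5⟩ := hT' b hb
        rw [hpp b (by omega)] at h3
        rw [hpp (b+1) (by omega)] at h5
        have e1 : X.card - 1 - b = X.card - 2 - b + 1 := by omega
        have e2 : X.card - 1 - (b+1) = X.card - 2 - b := by omega
        rw [e1] at h3
        rw [e2] at h5
        exact ⟨by omega, h5, h3⟩
    have hc := Finset.card_le_card hsub
    rw [Finset.card_union_of_disjoint hTT, Finset.card_image_of_injOn hinj] at hc
    rw [e, Finset.sum_union hdisj]
    omega

end Ctx

end

section

variable {V : Type*} [DecidableEq V]
variable {G : SimpleGraph V} {X Y : Finset V} {m : ℕ} {p : ℕ → V}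
variable {q : ℕ → V} {j : ℕ}
theorem telescope (α : ℕ → Prop) [DecidablePred α] (h0 : ¬ α 0) (l : ℕ) :
    (∑ i ∈ Finset.range (l+1), if α i then (if α (i-1) then 1 else 2) else 0) + 1 +
      ((Finset.range l).filter (fun h => ¬ α h ∧ ¬ α (h+1))).card =
      l + 1 + if α l then 1 else 0 := by
  induction l with
  | zero => simp [h0]
  | succ l ih =>
    have hf : (Finset.range (l+1)).filter (fun h => ¬ α h ∧ ¬ α (h+1)) =
        if ¬ α l ∧ ¬ α (l+1) then insert l ((Finset.range l).filter (fun h => ¬ α h ∧ ¬ α (h+1)))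
        else (Finset.range l).filter (fun h => ¬ α h ∧ ¬ α (h+1)) := by
      rw [Finset.range_add_one, Finset.filter_insert]
    rw [Finset.sum_range_succ, hf]
    by_cases h1 : α (l+1)
    · rw [if_pos h1, if_pos h1, Nat.add_sub_cancel,
        if_neg (c := ¬ α l ∧ ¬ α (l+1)) (fun h => h.2 h1)]
      by_cases h2 : α l
      · rw [if_pos h2] at ih ⊢
        omega
      · rw [if_neg h2] at ih ⊢
        omega
    · rw [if_neg h1, if_neg h1]
      by_cases h2 : α l
      · rw [if_neg (by tauto)]
        rw [if_pos h2] at ih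
        omega
      · rw [if_pos ⟨h2, h1⟩, Finset.card_insert_of_notMem (by simp)]
        rw [if_neg h2] at ih
        omega

namespace Ctx

variable {C : Finset (Finset V)} {pp : Finset V → ℕ → V} {R : Finset V → Finset (V × V)}

open Classical in
theorem pay_eq (h : Ctx G C pp R) (hX : X ∈ C) :
    (∑ a ∈ X.filter (IsA C R), gg C pp R a) + 1 +
      ((Finset.range (X.card - 1)).filter
        (fun i => ¬ IsA C R (pp X i) ∧ ¬ IsA C R (pp X (i+1)))).card = X.card := by
  have hp := h.hp X hX
  have hpos := hp.pos
  have h0 : ¬ IsA C R (pp X 0) := h.notA hX (hp.memX hpos) (Or.inl hp.en0)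
  have h1 : ¬ IsA C R (pp X (X.card - 1)) := h.notA hX (hp.memX (by omega)) (Or.inl hp.en)
  have ht := telescope (fun i => IsA C R (pp X i)) h0 (X.card - 1)
  have e : X.card - 1 + 1 = X.card := by omega
  rw [if_neg h1, e, Nat.add_zero] at ht
  refine Eq.trans ?_ ht
  congr 2
  have hX' : X = (Finset.range X.card).image (pp X) := by
    ext v
    rw [hp.mem v]
    simp
  rw [Finset.sum_filter]
  conv_lhs => rw [hX']
  rw [Finset.sum_image]
  · apply Finset.sum_congr rfl
    intro i hi
    rw [Finset.mem_range] at hi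
    by_cases hA : IsA C R (pp X i)
    · rw [if_pos hA, if_pos hA]
      have hi0 : i ≠ 0 := by
        rintro rfl
        exact h0 hA
      have : Pr C pp R (pp X i) ↔ IsA C R (pp X (i-1)) := by
        constructor
        · rintro ⟨P, hP, l, hl, e1, e2⟩
          have hPX : P = X := h.min.1.eq hP hX (e1 ▸ (h.hp P hP).memX hl) (hp.memX hi)
          subst hPX
          have := hp.inj _ _ hl hi e1
          rw [← this]
          exact e2
        · intro hA'
          have e : i - 1 + 1 = i := by omega
          exact ⟨X, hX, i - 1, by omega, by rw [e], hA'⟩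
      unfold gg
      simp only [this]
    · rw [if_neg hA, if_neg hA]
  · intro a ha b hb e
    simp only [Finset.coe_range, Set.mem_Iio] at ha hb
    exact hp.inj _ _ ha hb e

open Classical in
theorem rec_le_pay (h : Ctx G C pp R) :
    ∑ X ∈ C, ∑ r ∈ R X, gg C pp R r.2 ≤ ∑ X ∈ C, ∑ a ∈ X.filter (IsA C R), gg C pp R a := by
  have d1 : ∀ X ∈ C, ∀ Y ∈ C, X ≠ Y → Disjoint (R X) (R Y) := by
    intro X hX Y hY hne
    rw [Finset.disjoint_left]
    intro r h1 h2
    exact hne (h.min.1.eq hX hY (h.fst_mem hX h1) (h.fst_mem hY h2))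
  have d2 : ∀ X ∈ C, ∀ Y ∈ C, X ≠ Y → Disjoint (X.filter (IsA C R)) (Y.filter (IsA C R)) := by
    intro X hX Y hY hne
    exact Finset.disjoint_filter_filter (h.min.1.dj X hX Y hY hne)
  rw [← Finset.sum_biUnion (fun X hX Y hY hne => d1 X hX Y hY hne),
    ← Finset.sum_biUnion (fun X hX Y hY hne => d2 X hX Y hY hne)]
  have hinj : Set.InjOn Prod.snd ((C.biUnion R : Finset (V × V)) : Set (V × V)) := by
    rintro ⟨u, a⟩ h1 ⟨w, b⟩ h2 e
    simp only [Finset.coe_biUnion, Set.mem_iUnion, Finset.mem_coe] at h1 h2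
    obtain ⟨X, hX, h1⟩ := h1
    obtain ⟨Y, hY, h2⟩ := h2
    simp only at e
    subst e
    rw [h.uniq hX hY h1 h2]
  rw [← Finset.sum_image (f := gg C pp R) hinj]
  apply Finset.sum_le_sum_of_subset
  intro a ha
  simp only [Finset.mem_image, Finset.mem_biUnion] at ha
  obtain ⟨⟨u, a⟩, ⟨X, hX, h1⟩, rfl⟩ := ha
  obtain ⟨P, hP, haP⟩ := h.min.1.cov a
  simp only [Finset.mem_biUnion, Finset.mem_filter]
  exact ⟨P, hP, haP, X, hX, u, h1⟩

end Ctx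

theorem exists_out (hcon : G.Connected) {C : Finset (Finset V)} (hC : Cov G C) (h2 : 2 ≤ C.card)
    (hX : X ∈ C) : ∃ o ∈ X, Out G X o := by
  obtain ⟨Y, hY, hne⟩ := Finset.exists_mem_ne h2 X
  obtain ⟨x, hx⟩ := (hC.tr X hX).nonempty
  obtain ⟨y, hy⟩ := (hC.tr Y hY).nonempty
  have hyX : y ∉ X := fun h => hne (hC.eq hY hX hy h)
  obtain ⟨W⟩ := hcon.preconnected x y
  obtain ⟨d, -, h1, h3⟩ := W.exists_boundary_dart (X : Set V) hx hyX
  exact ⟨d.fst, h1, d.snd, d.adj, h3⟩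

theorem exists_ctx (hc : IsCub G) (hcon : G.Connected) {C : Finset (Finset V)} (hC : MinC G C)
    (h2 : 2 ≤ C.card) : ∃ pp R, Ctx G C pp R ∧ (∀ X ∈ C, Full G X → R X = ∅) ∧
      ∀ X ∈ C, ¬ Full G X → PartReq G X X.card (pp X) (R X) := by
  have h : ∀ X : Finset V, ∃ p : ℕ → V, ∃ R : Finset (V × V), X ∈ C → HP G X X.card p ∧
      (∀ r ∈ R, En G X r.1 ∧ G.Adj r.1 r.2 ∧ r.2 ∉ X) ∧
      (Full G X → R = ∅) ∧ (¬ Full G X → PartReq G X X.card p R) := by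
    intro X
    by_cases hX : X ∈ C
    · obtain ⟨a, b, m, p, hp, -, -⟩ := hC.1.tr X hX
      have e := hp.card
      subst e
      by_cases hf : Full G X
      · exact ⟨p, ∅, fun _ => ⟨hp, by simp, fun _ => rfl, fun h => absurd hf h⟩⟩
      · obtain ⟨o, hoX, ho⟩ := exists_out hcon hC.1 h2 hX
        obtain ⟨p, R, hR⟩ := part_req hc hp hf hoX ho
        exact ⟨p, R, fun _ => ⟨hR.1, hR.2.1, fun h => absurd h hf, fun _ => hR⟩⟩
    · have : Nonempty V := hcon.nonempty
      exact ⟨fun _ => Classical.arbitrary V, ∅, fun h => absurd h hX⟩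
  choose pp R hh using h
  exact ⟨pp, R, ⟨hc, hC, fun X hX => (hh X hX).1, fun X hX => (hh X hX).2.1⟩,
    fun X hX => (hh X hX).2.2.1, fun X hX => (hh X hX).2.2.2⟩

theorem Cov.card_eq [Fintype V] {C : Finset (Finset V)} (hC : Cov G C) :
    ∑ X ∈ C, X.card = Fintype.card V := by
  have e : C.biUnion id = Finset.univ := by
    ext v
    simp only [Finset.mem_biUnion, id, Finset.mem_univ, iff_true]
    exact hC.cov v
  rw [← Finset.card_univ, ← e, Finset.card_biUnion]
  · rfl
  · intro X hX Y hY hne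
    exact hC.dj X hX Y hY hne

theorem Best.bound [Fintype V] (hc : IsCub G) (hcon : G.Connected) {C : Finset (Finset V)}
    (h : Best G C) : 9 * C.card ≤ Fintype.card V + 8 := by
  classical
  have hpos : 0 < Fintype.card V := Fintype.card_pos_iff.2 hcon.nonempty
  by_cases h2 : 2 ≤ C.card
  · obtain ⟨pp, R, hctx, hfull, hnon⟩ := exists_ctx hc hcon h.1 h2
    have hloc : ∀ X ∈ C, (if Full G X then 1 else 9) +
        (∑ a ∈ X.filter (IsA C R), gg C pp R a) ≤ X.card + ∑ r ∈ R X, gg C pp R r.2 := by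
      intro X hX
      have h1 := hctx.pay_eq hX
      by_cases hf : Full G X
      · rw [if_pos hf]
        omega
      · rw [if_neg hf]
        have := hctx.local8 hX hf (hnon X hX hf)
        omega
    have hsum := Finset.sum_le_sum hloc
    rw [Finset.sum_add_distrib, Finset.sum_add_distrib, h.1.1.card_eq] at hsum
    have hrp := hctx.rec_le_pay
    have hone := h.one hc hcon
    have hite : (∑ X ∈ C, if Full G X then 1 else 9) + 8 * nFull G C = 9 * C.card := by
      unfold nFull
      rw [Finset.card_filter, Finset.mul_sum, ← Finset.sum_add_distrib, Finset.card_eq_sum_ones,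
        Finset.mul_sum]
      apply Finset.sum_congr rfl
      intro X _
      split_ifs <;> rfl
    omega
  · omega

/-- A Hamiltonian path as a walk. -/
theorem HP.walk (hp : HP G X m p) : ∃ W : G.Walk (p 0) (p (m-1)), W.IsPath ∧
    ∀ v, v ∈ W.support ↔ v ∈ X := by
  have key : ∀ l, l < m → ∃ W : G.Walk (p l) (p 0), W.IsPath ∧
      ∀ v, v ∈ W.support ↔ ∃ i, i ≤ l ∧ p i = v := by
    intro l
    induction l with
    | zero =>
      intro _
      refine ⟨SimpleGraph.Walk.nil, by simp, fun v => ?_⟩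
      simp only [SimpleGraph.Walk.support_nil, List.mem_singleton]
      constructor
      · rintro rfl
        exact ⟨0, le_refl _, rfl⟩
      · rintro ⟨i, hi, rfl⟩
        rw [Nat.le_zero.1 hi]
    | succ l ih =>
      intro hl
      obtain ⟨W, h1, h2⟩ := ih (by omega)
      refine ⟨SimpleGraph.Walk.cons (hp.adj l hl).symm W, ?_, fun v => ?_⟩
      · rw [SimpleGraph.Walk.cons_isPath_iff]
        refine ⟨h1, fun hm => ?_⟩
        obtain ⟨i, hi, e⟩ := (h2 _).1 hm
        have := hp.inj _ _ (by omega) hl e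
        omega
      · rw [SimpleGraph.Walk.support_cons, List.mem_cons, h2]
        constructor
        · rintro (rfl | ⟨i, hi, e⟩)
          · exact ⟨l+1, le_refl _, rfl⟩
          · exact ⟨i, by omega, e⟩
        · rintro ⟨i, hi, e⟩
          by_cases hil : i = l + 1
          · left; rw [← e, hil]
          · right; exact ⟨i, by omega, e⟩
  have hpos := hp.pos
  obtain ⟨W, h1, h2⟩ := key (m-1) (by omega)
  refine ⟨W.reverse, h1.reverse, fun v => ?_⟩
  rw [SimpleGraph.Walk.support_reverse, List.mem_reverse, h2, hp.mem]
  constructor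
  · rintro ⟨i, hi, e⟩
    exact ⟨i, by omega, e⟩
  · rintro ⟨i, hi, e⟩
    exact ⟨i, by omega, e⟩

theorem cub_of_degree [Fintype V] (G : SimpleGraph V) [DecidableRel G.Adj]
    (h : ∀ v, G.degree v = 3) : IsCub G := by
  intro v
  have := h v
  rw [← SimpleGraph.card_neighborFinset_eq_degree, Finset.card_eq_three] at this
  obtain ⟨a, b, c, h1, h2, h3, e⟩ := this
  refine ⟨a, b, c, h1, h2, h3, fun w => ?_⟩
  rw [← SimpleGraph.mem_neighborFinset, e]
  simp

theorem Cov.list {C : Finset (Finset V)} (hC : Cov G C) :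
    ∃ L : List (Σ (u : V) (v : V), G.Walk u v),
      L.length ≤ C.card ∧ (∀ p ∈ L, p.2.2.IsPath) ∧
      List.Pairwise (fun p q => ∀ x ∈ p.2.2.support, x ∉ q.2.2.support) L ∧
      (∀ x : V, ∃ p ∈ L, x ∈ p.2.2.support) := by
  classical
  have h : ∀ X : {X // X ∈ C}, ∃ w : Σ (u : V) (v : V), G.Walk u v, w.2.2.IsPath ∧
      ∀ v, v ∈ w.2.2.support ↔ v ∈ X.1 := by
    rintro ⟨X, hX⟩
    obtain ⟨a, b, m, p, hp, -, -⟩ := hC.tr X hX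
    obtain ⟨W, h1, h2⟩ := hp.walk
    exact ⟨⟨_, _, W⟩, h1, h2⟩
  choose f hf using h
  refine ⟨C.attach.toList.map f, by simp, ?_, ?_, ?_⟩
  · intro p hp
    rw [List.mem_map] at hp
    obtain ⟨X, -, rfl⟩ := hp
    exact (hf X).1
  · rw [List.pairwise_map]
    refine List.Pairwise.imp ?_ C.attach.nodup_toList
    intro X Y hne x hx hy
    rw [(hf _).2] at hx hy
    exact hne (Subtype.ext (hC.eq X.2 Y.2 hx hy))
  · intro x
    obtain ⟨X, hX, hx⟩ := hC.cov x
    refine ⟨f ⟨X, hX⟩, ?_, ((hf _).2 x).2 hx⟩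
    rw [List.mem_map]
    exact ⟨⟨X, hX⟩, by simp, rfl⟩

end

/-- Reed: every connected cubic simple graph on n vertices
contains at most ⌈n/9⌉ vertex-disjoint paths whose vertex sets together cover
all vertices of the graph. -/
theorem stmt_19 (n : ℕ) (G : SimpleGraph (Fin n)) [DecidableRel G.Adj]
    (hconn : G.Connected)
    (hcubic : ∀ v : Fin n, G.degree v = 3) :
    ∃ L : List (Σ (u : Fin n) (v : Fin n), G.Walk u v),
      L.length ≤ ⌈(n : ℚ) / 9⌉₊ ∧
      (∀ p ∈ L, p.2.2.IsPath) ∧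
      List.Pairwise (fun p q => ∀ x ∈ p.2.2.support, x ∉ q.2.2.support) L ∧
      (∀ x : Fin n, ∃ p ∈ L, x ∈ p.2.2.support) := by
  obtain ⟨C, hC⟩ := exists_best G
  have hb := hC.bound (cub_of_degree G hcubic) hconn
  rw [Fintype.card_fin] at hb
  obtain ⟨L, h1, h2⟩ := hC.1.1.list
  refine ⟨L, h1.trans ?_, h2⟩
  have h3 : (n : ℚ) / 9 ≤ (⌈(n : ℚ) / 9⌉₊ : ℚ) := Nat.le_ceil _
  rw [div_le_iff₀ (by norm_num)] at h3
  have h4 : n ≤ ⌈(n : ℚ) / 9⌉₊ * 9 := by exact_mod_cast h3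
  omega
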